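/- arXiv:math/0608080 — 9 statements merged into one kernel-verified Lean document; each statement's English description precedes it below -/
import Mathlib

section
/- For every natural number i with i ≥ 1, the Johnson-type matrices satisfy the three-term recursion J_1 * J_i = (m−i+1)(N−m−i+1) · J_{i−1} + i·(N−2i) · J_i + (i+1)^2 · J_{i+1}, as an identity of Ω × Ω matrices over the integers (where N−2i is taken as an integer, possibly negative). -/
/-!
The `(S, T)` entry of `J_1 * J_i` counts the sets `U` at distance one from `S` with
`|U ∩ T| = m - i`. Such `U` are exactly the swaps `(S \ {x}) ∪ {y}` with `x ∈ S`, `y ∉ S`, each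
arising from a unique pair `(x, y)` (`sum_J_one_mul`). A swap changes `|S ∩ T|` by
`[y ∈ T] - [x ∈ T]` (`card_swap_inter`), so the entry is determined by the sizes of the four
regions that `S` and `T` cut out of `Fin N`: with `|S ∩ T| = a`, these are `a` (in both), `m - a`
(in `S` only), `m - a` (in `T` only) and `N - 2m + a` (in neither). Substituting
`a = m - i + 1`, `m - i`, `m - i - 1` gives the three coefficients.
-/

open Finset

/-- `Omega N m` is the type of `m`-element subsets of `Fin N`. -/
abbrev Omega (N m : ℕ) := {S : Finset (Fin N) // S.card = m}

/-- `J N m i` is the Ω × Ω integer matrix whose `(S, T)` entry is `1` if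
`|S ∩ T| = m − i` (i.e. `|S ∩ T| + i = m`) and `0` otherwise.  It encodes
the perturbed `i`-deck operation: remove `i` elements and add `i` elements
not originally present. -/
def J (N m i : ℕ) : Matrix (Omega N m) (Omega N m) ℤ := fun S T =>
  if ((S : Finset (Fin N)) ∩ (T : Finset (Fin N))).card + i = m then 1 else 0

/-- Multiplying by `J_1` sums over all swaps of an element of `S` for an element outside `S`. -/
lemma sum_J_one_mul (N m : ℕ) (S : Omega N m) (F : Finset (Fin N) → ℤ) :
    ∑ U : Omega N m, J N m 1 S U * F U
      = ∑ p ∈ S.1 ×ˢ S.1ᶜ, F (insert p.2 (S.1.erase p.1)) := by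
  obtain ⟨S, hS⟩ := S
  simp only [J, ite_mul, one_mul, zero_mul]
  rw [← Finset.sum_filter]
  symm
  have hcard : ∀ p ∈ S ×ˢ Sᶜ, (insert p.2 (S.erase p.1)).card = m := by
    rintro ⟨x, y⟩ hp
    simp only [mem_product, mem_compl] at hp
    have := card_pos.2 ⟨x, hp.1⟩
    rw [card_insert_of_notMem (by simp [hp.2]), card_erase_of_mem hp.1]
    omega
  refine Finset.sum_bij (fun p hp => ⟨insert p.2 (S.erase p.1), hcard p hp⟩) ?_ ?_ ?_ ?_
  · rintro ⟨x, y⟩ hp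
    simp only [mem_product, mem_compl] at hp
    have := card_pos.2 ⟨x, hp.1⟩
    have h : S ∩ insert y (S.erase x) = S.erase x := by grind
    simp only [mem_filter, mem_univ, true_and]
    rw [h, card_erase_of_mem hp.1]
    omega
  · rintro ⟨x, y⟩ hp ⟨x', y'⟩ hp' h
    simp only [mem_product, mem_compl] at hp hp'
    have h := Subtype.mk.inj h
    -- `x` is the only element of `S` missing from the swap, `y` the only one outside `S` in it.
    have hx : x = x' := by
      by_contra hne
      have : x ∈ insert y' (S.erase x') := by simp [hne, hp.1]
      rw [← h] at this
      grind
    have hy : y = y' := by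
      have : y ∈ insert y' (S.erase x') := h ▸ mem_insert_self _ _
      grind
    rw [hx, hy]
  · rintro ⟨U, hU⟩ h
    simp only [mem_filter, mem_univ, true_and] at h
    have h1 := card_sdiff_add_card_inter S U
    have h2 := card_sdiff_add_card_inter U S
    rw [inter_comm U S] at h2
    obtain ⟨x, hx⟩ := card_eq_one.1 (show (S \ U).card = 1 by omega)
    obtain ⟨y, hy⟩ := card_eq_one.1 (show (U \ S).card = 1 by omega)
    have ex : ∀ z, (z ∈ S ∧ z ∉ U) ↔ z = x := fun z => by
      rw [← mem_sdiff, hx, mem_singleton]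
    have ey : ∀ z, (z ∈ U ∧ z ∉ S) ↔ z = y := fun z => by
      rw [← mem_sdiff, hy, mem_singleton]
    refine ⟨(x, y), ?_, ?_⟩
    · simp only [mem_product, mem_compl]
      exact ⟨((ex x).2 rfl).1, ((ey y).2 rfl).2⟩
    · apply Subtype.ext
      ext z
      have := ex z
      have := ey z
      simp only [mem_insert, mem_erase]
      tauto
  · intros
    rfl

lemma card_swap_inter {N : ℕ} (S T : Finset (Fin N)) {x y : Fin N} (hx : x ∈ S) (hy : y ∉ S) :
    (insert y (S.erase x) ∩ T).card + (if x ∈ T then 1 else 0)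
      = (S ∩ T).card + (if y ∈ T then 1 else 0) := by
  have h1 : (S.erase x ∩ T).card + (if x ∈ T then 1 else 0) = (S ∩ T).card := by
    rw [erase_inter]
    split_ifs with h
    · exact card_erase_add_one (mem_inter.2 ⟨hx, h⟩)
    · rw [erase_eq_of_notMem (by simp [h]), add_zero]
  by_cases h : y ∈ T
  · rw [insert_inter_of_mem h, card_insert_of_notMem (by simp [hy]), if_pos h]
    omega
  · rw [insert_inter_of_notMem h, if_neg h]
    omega

/-- Three-term recursion for the Johnson-type matrices:
`J_1 * J_i = (m−i+1)(N−m−i+1)·J_{i−1} + i(N−2i)·J_i + (i+1)²·J_{i+1}` for `i ≥ 1`. -/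
theorem johnson_recursion (N m : ℕ) (hm : m ≤ N) (i : ℕ) (hi : 1 ≤ i) :
    J N m 1 * J N m i
      = (((m : ℤ) - i + 1) * ((N : ℤ) - m - i + 1)) • J N m (i - 1)
        + ((i : ℤ) * ((N : ℤ) - 2 * i)) • J N m i
        + (((i : ℤ) + 1) ^ 2) • J N m (i + 1) := by
  ext S T
  rw [Matrix.mul_apply]
  have key := sum_J_one_mul N m S (fun U => if (U ∩ T.1).card + i = m then 1 else 0)
  refine Eq.trans key ?_
  clear key
  obtain ⟨S, hS⟩ := S
  obtain ⟨T, hT⟩ := T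
  simp only [Matrix.add_apply, Matrix.smul_apply, J, smul_eq_mul]
  obtain ⟨a, ha⟩ : ∃ a, (S ∩ T).card = a := ⟨_, rfl⟩
  -- The sizes of the four regions cut out by `S` and `T`.
  have c1 : (S.filter (· ∈ T)).card = a := by rw [filter_mem_eq_inter, ha]
  have c2 : (S.filter (· ∉ T)).card + a = m := by
    have := card_filter_add_card_filter_not (s := S) (· ∈ T)
    omega
  have c3 : (Sᶜ.filter (· ∈ T)).card + a = m := by
    have h : Sᶜ.filter (· ∈ T) = T \ S := by ext; simp [and_comm]
    have := card_sdiff_add_card_inter T S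
    rw [inter_comm] at this
    rw [h]
    omega
  have c4 : (Sᶜ.filter (· ∉ T)).card + 2 * m = N + a := by
    have := card_filter_add_card_filter_not (s := Sᶜ) (· ∈ T)
    have h := card_add_card_compl S
    rw [Fintype.card_fin] at h
    omega
  have hswap : ∀ p ∈ S ×ˢ Sᶜ,
      (if (insert p.2 (S.erase p.1) ∩ T).card + i = m then (1 : ℤ) else 0)
        = if p.1 ∈ T then
            (if p.2 ∈ T then (if a + i = m then 1 else 0) else (if a + i = m + 1 then 1 else 0))
          else
            (if p.2 ∈ T then (if a + i + 1 = m then 1 else 0)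
              else (if a + i = m then 1 else 0)) := by
    rintro ⟨x, y⟩ hp
    simp only [mem_product, mem_compl] at hp
    have := card_swap_inter S T hp.1 hp.2
    rw [ha] at this
    dsimp only
    split_ifs at this ⊢ <;> first | rfl | omega
  rw [Finset.sum_congr rfl hswap, Finset.sum_product]
  simp only [Finset.sum_ite (p := fun z => z ∈ T), Finset.sum_ite_irrel, Finset.sum_const, c1,
    ha, nsmul_eq_mul]
  generalize (S.filter (· ∉ T)).card = b at *
  generalize (Sᶜ.filter (· ∈ T)).card = c at *
  generalize (Sᶜ.filter (· ∉ T)).card = d at *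
  have hb : (b : ℤ) = m - a := by omega
  have hc : (c : ℤ) = m - a := by omega
  have hd : (d : ℤ) = N + a - 2 * m := by omega
  rw [hb, hc, hd]
  -- The indicators in `a` are mutually exclusive, so exactly one coefficient survives, or none.
  have f1 : a + (i - 1) = m ↔ a + i = m + 1 := by omega
  have f2 : a + (i + 1) = m ↔ a + i + 1 = m := by omega
  simp only [f1, f2]
  by_cases e1 : a + i = m + 1
  · have hma : (m : ℤ) = a + i - 1 := by omega
    have e2 : ¬ a + i = m := by omega
    have e3 : ¬ a + i + 1 = m := by omega
    simp only [if_pos e1, if_neg e2, if_neg e3, hma]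
    ring
  by_cases e2 : a + i = m
  · have hma : (m : ℤ) = a + i := by omega
    have e3 : ¬ a + i + 1 = m := by omega
    simp only [if_neg e1, if_pos e2, if_neg e3, hma]
    ring
  by_cases e3 : a + i + 1 = m
  · have hma : (m : ℤ) = a + i + 1 := by omega
    simp only [if_neg e1, if_neg e2, if_pos e3, hma]
    ring
  · simp only [if_neg e1, if_neg e2, if_neg e3]
    ring
end

section
/- Let G be a simple graph on Fin n with exactly m edges, let N = C(n,2), and let i ≥ 1 be a natural number. Then for every simple graph H on Fin n, the number of pairs (K, H') with K a member of PD_i(G) and H' a member of PD_1(K) isomorphic-as-labelled-graph-equal to H (i.e. the multiplicity of H in the multiset union of PD_1 over all members of PD_i(G), counted with multiplicity) equals, as integers, (m−i+1)(N−m−i+1) times the multiplicity of H in PD_{i−1}(G), plus i·(N−2i) times the multiplicity of H in PD_i(G), plus (i+1)^2 times the multiplicity of H in PD_{i+1}(G). -/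
/-!
A labelled graph determines the edges exchanged to obtain it from `G`, so `PD j G` is multiplicity
free: `H` occurs in it, once, exactly when both differences of the edge sets of `G` and `H` have
`j` elements (`Swap j G H`; see `count_PD`). This relation is symmetric, so the left-hand side of
the recursion counts the pairs `(y, x)`, with `y` an edge and `x` a non-edge of `H`, for which
`H - y + x` is at swap distance `i` from `G` (`count_bind_PD`).

Whether a pair is counted depends only on the swap distance `j` between `G` and `H` and on which of
`x`, `y` are edges of `G` (`card_sdiff_single_swap`). If `j = i - 1`, then `y` is a common edge and
`x` a common non-edge: `(m - j)(N - m - j)` pairs. If `j = i`, either `y ∉ G` and `x ∉ G`, or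
`y ∈ G` and `x ∈ G`: `i (N - m - i) + (m - i) i = i (N - 2 i)` pairs. If `j = i + 1`, then `y ∉ G`
and `x ∈ G`: `(i + 1)²` pairs. For any other `H` both sides vanish.
-/

open Finset

noncomputable section
open scoped Classical

/-- Two simple graphs on `Fin n` are related iff they are isomorphic. -/
def isoSetoid (n : ℕ) : Setoid (SimpleGraph (Fin n)) where
  r G H := Nonempty (G ≃g H)
  iseqv := ⟨fun _ => ⟨SimpleGraph.Iso.refl⟩, fun h => ⟨h.some.symm⟩,
    fun h h' => ⟨h.some.trans h'.some⟩⟩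

/-- The isomorphism class of a simple graph on `Fin n`. -/
def isoClass {n : ℕ} (G : SimpleGraph (Fin n)) : Quotient (isoSetoid n) :=
  Quotient.mk (isoSetoid n) G

/-- The `i`-edge deck `ED_i(G)`: the multiset of graphs `G − X` over all
`i`-element subsets `X` of the edge set of `G`. -/
def ED {n : ℕ} (i : ℕ) (G : SimpleGraph (Fin n)) : Multiset (SimpleGraph (Fin n)) :=
  (G.edgeFinset.powersetCard i).val.map fun X =>
    G.deleteEdges (X : Set (Sym2 (Fin n)))

/-- The perturbed `i`-deck `PD_i(G)`: the multiset of graphs `(G − X) + Y` over all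
pairs of an `i`-element subset `X` of the edges of `G` and an `i`-element set `Y`
of non-edges of `G`. -/
def PD {n : ℕ} (i : ℕ) (G : SimpleGraph (Fin n)) : Multiset (SimpleGraph (Fin n)) :=
  ((G.edgeFinset.powersetCard i) ×ˢ (Gᶜ.edgeFinset.powersetCard i)).val.map fun p =>
    SimpleGraph.fromEdgeSet
      (((G.edgeFinset \ p.1) ∪ p.2 : Finset (Sym2 (Fin n))) : Set (Sym2 (Fin n)))

/-- The modified `i`-deck `MD_i(G)`: the multiset of graphs `(G − X) + Y` over all
pairs of an `i`-element subset `X` of the edges of `G` and an `i`-element set `Y`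
of non-edges of `G − X` (so `Y` may reuse edges of `X`). -/
def MD {n : ℕ} (i : ℕ) (G : SimpleGraph (Fin n)) : Multiset (SimpleGraph (Fin n)) :=
  (G.edgeFinset.powersetCard i).val.bind fun X =>
    ((G.deleteEdges (X : Set (Sym2 (Fin n))))ᶜ.edgeFinset.powersetCard i).val.map fun Y =>
      SimpleGraph.fromEdgeSet
        (((G.edgeFinset \ X) ∪ Y : Finset (Sym2 (Fin n))) : Set (Sym2 (Fin n)))

/-- `Swap j G K` says that `K` arises from `G` by exchanging `j` edges against `j` non-edges. -/
def Swap {n : ℕ} (j : ℕ) (G K : SimpleGraph (Fin n)) : Prop :=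
  (G.edgeFinset \ K.edgeFinset).card = j ∧ (K.edgeFinset \ G.edgeFinset).card = j

lemma swap_comm {n : ℕ} (j : ℕ) (G K : SimpleGraph (Fin n)) : Swap j G K ↔ Swap j K G :=
  and_comm

lemma mem_compl_edgeFinset {n : ℕ} (G : SimpleGraph (Fin n)) (e : Sym2 (Fin n)) :
    e ∈ Gᶜ.edgeFinset ↔ ¬ e.IsDiag ∧ e ∉ G.edgeFinset := by
  induction e with
  | h a b => simp [SimpleGraph.compl_adj]

lemma not_isDiag_of_mem {n : ℕ} (G : SimpleGraph (Fin n)) (e : Sym2 (Fin n))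
    (he : e ∈ G.edgeFinset) : ¬ e.IsDiag :=
  G.not_isDiag_of_mem_edgeSet (SimpleGraph.mem_edgeFinset.1 he)

/-- The new graph is named `K` so that the `Fintype` instance on its edge set is the one obtained for
a general graph, as in `Swap`. -/
lemma edgeFinset_swap {n : ℕ} (G : SimpleGraph (Fin n)) (X Y : Finset (Sym2 (Fin n)))
    (hY : Y ⊆ Gᶜ.edgeFinset) (K : SimpleGraph (Fin n))
    (hK : SimpleGraph.fromEdgeSet
      (((G.edgeFinset \ X) ∪ Y : Finset (Sym2 (Fin n))) : Set (Sym2 (Fin n))) = K) :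
    K.edgeFinset = (G.edgeFinset \ X) ∪ Y := by
  ext e
  have h1 := not_isDiag_of_mem G e
  have h2 : e ∈ Y → ¬ e.IsDiag := fun h => ((mem_compl_edgeFinset G e).1 (hY h)).1
  rw [SimpleGraph.mem_edgeFinset, ← hK, SimpleGraph.edgeSet_fromEdgeSet]
  simp only [Set.mem_sdiff, Finset.mem_coe, Finset.mem_union, Finset.mem_sdiff]
  have h3 : e ∈ {e : Sym2 (Fin n) | e.IsDiag} ↔ e.IsDiag := Iff.rfl
  tauto

/-- The removed and added edge sets are recovered from the resulting graph, so the perturbed deck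
of labelled graphs has no repetitions: it is the set of graphs at swap distance `j`. -/
lemma PD_eq_filter {n : ℕ} (j : ℕ) (G : SimpleGraph (Fin n)) :
    PD j G = (Finset.univ.filter fun K => Swap j G K).val := by
  have key : ∀ X Y : Finset (Sym2 (Fin n)), X ⊆ G.edgeFinset → Y ⊆ Gᶜ.edgeFinset →
      G.edgeFinset \ ((G.edgeFinset \ X) ∪ Y) = X ∧
      ((G.edgeFinset \ X) ∪ Y) \ G.edgeFinset = Y := by
    intro X Y hX hY
    have hY' : ∀ e ∈ Y, e ∉ G.edgeFinset := fun e he => ((mem_compl_edgeFinset G e).1 (hY he)).2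
    constructor <;> ext e <;> have := @hX e <;> have := hY' e <;>
      simp only [Finset.mem_union, Finset.mem_sdiff] <;> tauto
  have hnd : (PD j G).Nodup := by
    refine Multiset.Nodup.map_on ?_ (Finset.nodup _)
    rintro ⟨X, Y⟩ h ⟨X', Y'⟩ h' heq
    simp only [Finset.mem_val, Finset.mem_product, Finset.mem_powersetCard] at h h'
    have hE : (G.edgeFinset \ X) ∪ Y = (G.edgeFinset \ X') ∪ Y' :=
      (edgeFinset_swap G X Y h.2.1 _ heq).symm.trans (edgeFinset_swap G X' Y' h'.2.1 _ rfl)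
    have k := key X Y h.1.1 h.2.1
    have k' := key X' Y' h'.1.1 h'.2.1
    rw [hE] at k
    exact Prod.ext (k.1.symm.trans k'.1) (k.2.symm.trans k'.2)
  refine (Multiset.Nodup.ext hnd (Finset.nodup _)).2 fun K => ?_
  simp only [PD, Multiset.mem_map, Finset.mem_val, Finset.mem_product, Finset.mem_powersetCard,
    Finset.mem_filter, Finset.mem_univ, true_and]
  constructor
  · rintro ⟨⟨X, Y⟩, ⟨⟨hX, hXc⟩, hY, hYc⟩, hK⟩
    dsimp only at hX hXc hY hYc
    have k := key X Y hX hY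
    rw [Swap, edgeFinset_swap G X Y hY K hK, k.1, k.2]
    exact ⟨hXc, hYc⟩
  · rintro ⟨h1, h2⟩
    have hY : K.edgeFinset \ G.edgeFinset ⊆ Gᶜ.edgeFinset := fun e he => by
      rw [Finset.mem_sdiff] at he
      exact (mem_compl_edgeFinset G e).2 ⟨not_isDiag_of_mem K e he.1, he.2⟩
    refine ⟨(G.edgeFinset \ K.edgeFinset, K.edgeFinset \ G.edgeFinset),
      ⟨⟨Finset.sdiff_subset, h1⟩, hY, h2⟩, ?_⟩
    have hU : (G.edgeFinset \ (G.edgeFinset \ K.edgeFinset)) ∪ (K.edgeFinset \ G.edgeFinset)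
        = K.edgeFinset := by
      ext e
      simp only [Finset.mem_union, Finset.mem_sdiff]
      tauto
    dsimp only
    rw [hU, SimpleGraph.coe_edgeFinset, SimpleGraph.fromEdgeSet_edgeSet]

lemma count_PD {n : ℕ} (j : ℕ) (G H : SimpleGraph (Fin n)) :
    (PD j G).count H = if Swap j G H then 1 else 0 := by
  rw [PD_eq_filter, Multiset.count_eq_of_nodup (Finset.nodup _)]
  simp

/-- Double counting: as swaps are reversible, the two-step swaps from `G` to `H` are counted by the
single swaps of `H` that land at distance `i` from `G`. -/
lemma count_bind_PD {n : ℕ} (i : ℕ) (G H : SimpleGraph (Fin n)) :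
    ((PD i G).bind (PD 1)).count H
      = ∑ y ∈ H.edgeFinset, ∑ x ∈ Hᶜ.edgeFinset,
          if Swap i G (SimpleGraph.fromEdgeSet
            (((H.edgeFinset \ {y}) ∪ {x} : Finset (Sym2 (Fin n))) : Set (Sym2 (Fin n))))
          then 1 else 0 := by
  have h1 : ((PD i G).bind (PD 1)).count H
      = ((PD 1 H).map fun K => if Swap i G K then 1 else 0).sum := by
    rw [Multiset.count_bind, PD_eq_filter i G, PD_eq_filter 1 H]
    change ∑ K ∈ Finset.univ.filter (fun K => Swap i G K), (PD 1 K).count H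
      = ∑ K ∈ Finset.univ.filter (fun K => Swap 1 H K), if Swap i G K then 1 else 0
    simp only [count_PD, Finset.sum_filter, swap_comm 1 _ H]
    refine Finset.sum_congr rfl fun K _ => ?_
    split_ifs <;> rfl
  rw [h1, PD, Multiset.map_map, ← Finset.sum_product']
  change ∑ p ∈ _, _ = _
  symm
  refine Finset.sum_bij (fun p _ => (({p.1} : Finset (Sym2 (Fin n))), {p.2})) ?_ ?_ ?_ ?_
  · rintro ⟨y, x⟩ h
    simpa [Finset.mem_powersetCard] using h
  · rintro ⟨y, x⟩ _ ⟨y', x'⟩ _ h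
    simpa using h
  · rintro ⟨Y, X⟩ h
    simp only [Finset.mem_product, Finset.mem_powersetCard, Finset.card_eq_one] at h
    obtain ⟨⟨hy, y, rfl⟩, hx, x, rfl⟩ := h
    exact ⟨(y, x), Finset.mem_product.2
      ⟨Finset.singleton_subset_iff.1 hy, Finset.singleton_subset_iff.1 hx⟩, rfl⟩
  · intros
    rfl

/-- Effect of a single swap on both difference sizes, stated additively to avoid truncation. -/
lemma card_sdiff_single_swap {α : Type*} [DecidableEq α] (E F : Finset α) (x y : α)
    (hy : y ∈ F) (hx : x ∉ F) :
    (E \ ((F \ {y}) ∪ {x})).card + (if x ∈ E then 1 else 0)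
      = (E \ F).card + (if y ∈ E then 1 else 0) ∧
    (((F \ {y}) ∪ {x}) \ E).card + (if y ∈ E then 0 else 1)
      = (F \ E).card + (if x ∈ E then 0 else 1) := by
  have hxy : x ≠ y := fun h => hx (h ▸ hy)
  constructor
  · have e : E \ ((F \ {y}) ∪ {x}) = ((E \ F) \ {x}) ∪ (E ∩ {y}) := by
      ext e
      simp only [Finset.mem_union, Finset.mem_sdiff, Finset.mem_inter, Finset.mem_singleton]
      by_cases h1 : e = x <;> by_cases h2 : e = y <;> subst_vars <;> tauto
    rw [e, Finset.card_union_of_disjoint]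
    · by_cases h1 : x ∈ E <;> by_cases h2 : y ∈ E
      all_goals simp only [h1, h2, if_true, if_false]
      all_goals grind
    · rw [Finset.disjoint_left]
      grind
  · have e : ((F \ {y}) ∪ {x}) \ E = ((F \ E) \ {y}) ∪ ({x} \ E) := by
      ext e
      simp only [Finset.mem_union, Finset.mem_sdiff, Finset.mem_singleton]
      by_cases h1 : e = x <;> by_cases h2 : e = y <;> subst_vars <;> tauto
    rw [e, Finset.card_union_of_disjoint]
    · by_cases h1 : x ∈ E <;> by_cases h2 : y ∈ E
      all_goals simp only [h1, h2, if_true, if_false]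
      all_goals grind
    · rw [Finset.disjoint_left]
      grind

lemma sum_ite_mem_const {α : Type*} [DecidableEq α] (F E : Finset α) (a b : ℤ) :
    ∑ y ∈ F, (if y ∈ E then a else b) = (F ∩ E).card * a + (F \ E).card * b := by
  rw [Finset.sum_ite, Finset.filter_mem_eq_inter, Finset.filter_notMem_eq_sdiff]
  simp

/-- Recursion for perturbed decks: for an `m`-edge graph `G` on `Fin n`, with
`N = C(n,2)` and `i ≥ 1`, the multiplicity of any graph `H` in the multiset union
of `PD_1` over the members of `PD_i(G)` equals
`(m−i+1)(N−m−i+1)` times its multiplicity in `PD_{i−1}(G)`, plus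
`i(N−2i)` times its multiplicity in `PD_i(G)`, plus
`(i+1)²` times its multiplicity in `PD_{i+1}(G)`. -/
theorem perturbed_deck_recursion (n m : ℕ) (G : SimpleGraph (Fin n))
    (hG : G.edgeFinset.card = m) (i : ℕ) (hi : 1 ≤ i) (H : SimpleGraph (Fin n)) :
    (((PD i G).bind (PD 1)).count H : ℤ)
      = ((m : ℤ) - i + 1) * ((n.choose 2 : ℤ) - m - i + 1) * ((PD (i - 1) G).count H : ℤ)
        + (i : ℤ) * ((n.choose 2 : ℤ) - 2 * i) * ((PD i G).count H : ℤ)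
        + ((i : ℤ) + 1) ^ 2 * ((PD (i + 1) G).count H : ℤ) := by
  set E := G.edgeFinset with hE
  set F := H.edgeFinset with hF
  have hsum : (((PD i G).bind (PD 1)).count H : ℤ)
      = ∑ y ∈ F, (if y ∈ E
          then ∑ x ∈ Hᶜ.edgeFinset, (if x ∈ E
            then (if (E \ F).card = i ∧ (F \ E).card = i then (1 : ℤ) else 0)
            else (if (E \ F).card + 1 = i ∧ (F \ E).card + 1 = i then 1 else 0))
          else ∑ x ∈ Hᶜ.edgeFinset, (if x ∈ E
            then (if (E \ F).card = i + 1 ∧ (F \ E).card = i + 1 then 1 else 0)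
            else (if (E \ F).card = i ∧ (F \ E).card = i then 1 else 0))) := by
    rw [count_bind_PD]
    simp only [Nat.cast_sum, Nat.cast_ite, Nat.cast_one, Nat.cast_zero]
    refine Finset.sum_congr rfl fun y hy => ?_
    rw [← Finset.sum_ite_irrel]
    refine Finset.sum_congr rfl fun x hx => ?_
    have hx' := ((mem_compl_edgeFinset H x).1 hx).2
    have hc := card_sdiff_single_swap E F x y hy hx'
    have hsw : Swap i G (SimpleGraph.fromEdgeSet
        (((H.edgeFinset \ {y}) ∪ {x} : Finset (Sym2 (Fin n))) : Set (Sym2 (Fin n)))) ↔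
        (E \ ((F \ {y}) ∪ {x})).card = i ∧ (((F \ {y}) ∪ {x}) \ E).card = i := by
      generalize hK : SimpleGraph.fromEdgeSet
        (((H.edgeFinset \ {y}) ∪ {x} : Finset (Sym2 (Fin n))) : Set (Sym2 (Fin n))) = K
      rw [Swap, edgeFinset_swap H {y} {x} (Finset.singleton_subset_iff.2 hx) K hK]
    simp only [hsw]
    by_cases h1 : x ∈ E <;> by_cases h2 : y ∈ E
    all_goals
      simp only [h1, h2, if_true, if_false] at hc ⊢
      refine if_congr ?_ rfl rfl
      omega
  rw [hsum]
  have hS : ∀ j, Swap j G H ↔ (E \ F).card = j ∧ (F \ E).card = j := fun _ => Iff.rfl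
  simp only [sum_ite_mem_const, count_PD, hS]
  have c1 : Hᶜ.edgeFinset ∩ E = E \ F := by
    ext e
    have := not_isDiag_of_mem G e
    rw [Finset.mem_inter, Finset.mem_sdiff, mem_compl_edgeFinset]
    tauto
  have c2 : (Hᶜ.edgeFinset \ E).card + E.card + (F \ E).card = n.choose 2 := by
    have hN : (⊤ : SimpleGraph (Fin n)).edgeFinset.card = n.choose 2 := by
      rw [SimpleGraph.card_edgeFinset_top_eq_card_choose_two, Fintype.card_fin]
    have hU : (⊤ : SimpleGraph (Fin n)).edgeFinset = (Hᶜ.edgeFinset \ E) ∪ E ∪ (F \ E) := by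
      ext e
      have h1 := not_isDiag_of_mem G e
      have h2 := not_isDiag_of_mem H e
      have h3 : e ∈ (⊤ : SimpleGraph (Fin n)).edgeFinset ↔ ¬ e.IsDiag := by
        simp
      rw [h3]
      simp only [Finset.mem_union, Finset.mem_sdiff, mem_compl_edgeFinset]
      tauto
    rw [← hN, hU, Finset.card_union_of_disjoint, Finset.card_union_of_disjoint]
    · exact Finset.sdiff_disjoint
    · rw [Finset.disjoint_left]
      intro e
      simp only [Finset.mem_union, Finset.mem_sdiff, mem_compl_edgeFinset]
      tauto
  have c3 : (F ∩ E).card + (E \ F).card = m := by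
    rw [← hG, Finset.inter_comm, Finset.card_inter_add_card_sdiff]
  rw [c1]
  rw [hG] at c2
  have c2' : ((Hᶜ.edgeFinset \ E).card : ℤ) = n.choose 2 - m - (F \ E).card := by
    rw [← c2]; push_cast; ring
  have c3' : ((F ∩ E).card : ℤ) = m - (E \ F).card := by rw [← c3]; push_cast; ring
  rw [c2', c3']
  generalize (E \ F).card = a
  generalize (F \ E).card = b
  obtain ⟨k, rfl⟩ : ∃ k, i = k + 1 := ⟨i - 1, by omega⟩
  rw [Nat.add_sub_cancel]
  by_cases hab : a = b
  · subst hab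
    simp only [and_self, Nat.add_right_cancel_iff]
    by_cases h1 : a = k
    · subst h1; simp [show a ≠ a + 1 + 1 by omega]; ring
    by_cases h2 : a = k + 1
    · subst h2; simp; ring
    by_cases h3 : a = k + 1 + 1
    · subst h3; simp [show k + 1 + 1 ≠ k by omega]; ring
    simp [h1, h2, h3]
  · have hz : ∀ t : ℕ, ¬ (a = t ∧ b = t) := by omega
    simp [hz]

end
end

section
/- For every natural number k there exists a polynomial p over ℚ with zero constant coefficient (p.coeff 0 = 0) such that, as Ω × Ω matrices over ℚ, J_k = p(B_1) + (−1)^k · \binom{m}{k} · I, where p(B_1) denotes the evaluation of p at the matrix B_1 and I is the identity matrix. -/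
/-!
The matrices `J_i` are the distance matrices of the Johnson scheme, and `B_1 = J_1 + m I`.
Multiplying `J_k` by `B_1` sums, over all single exchanges `S ↦ (S \ {x}) ∪ {y}`, a function of
`|T ∩ ·|`. Such an exchange changes `|T ∩ S|` by at most one, so sorting the pairs `(x, y)` by
membership in `T` gives the three-term recurrence (`JZ_mul_B`)

`J_k B_1 = (k+1)² J_{k+1} + (m + k(N-2k)) J_k + (m-k+1)(N-m-k+1) J_{k-1}`.

As `(k+1)² ≠ 0` in `ℚ`, this determines polynomials `p_k` recursively with
`J_k = p_k(B_1) + c_k I`, where the scalars `c_k = (-1)^k C(m,k)` satisfy the recurrence obtained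
by replacing `B_1` with `0`; hence the constant coefficients of the `p_k` remain `0`.
-/

open Finset

/-- `B N m k` is the Ω × Ω integer matrix whose `(T, S)` entry is the number of
pairs `(X, Y)` with `X ⊆ S`, `|X| = k`, `Y ∩ (S \ X) = ∅`, `|Y| = k` and
`(S \ X) ∪ Y = T`.  It encodes the modified `k`-deck operation: remove `k`
elements, then add `k` elements not currently present (an added element may
coincide with a removed one). -/
def B (N m k : ℕ) : Matrix (Omega N m) (Omega N m) ℤ := fun T S =>
  ((Finset.univ.filter (fun p : Finset (Fin N) × Finset (Fin N) =>
      p.1 ⊆ (S : Finset (Fin N)) ∧ p.1.card = k ∧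
      p.2 ∩ ((S : Finset (Fin N)) \ p.1) = ∅ ∧ p.2.card = k ∧
      ((S : Finset (Fin N)) \ p.1) ∪ p.2 = (T : Finset (Fin N)))).card : ℤ)

/-- The distance matrices `J_i` over `ℚ`, indexed by integers so that the three-term recurrence
also makes sense at `i = 0`, where it involves `J_{-1} = 0`. -/
def JZ (N m : ℕ) (i : ℤ) : Matrix (Omega N m) (Omega N m) ℚ := fun S T =>
  if (((S : Finset (Fin N)) ∩ (T : Finset (Fin N))).card : ℤ) + i = m then 1 else 0

lemma JZ_natCast (N m k : ℕ) : JZ N m k = (J N m k).map (Int.cast : ℤ → ℚ) := by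
  ext S T
  simp only [JZ, J, Matrix.map_apply]
  norm_cast

lemma JZ_neg_one (N m : ℕ) : JZ N m (-1) = 0 := by
  ext S T
  have h : ((S : Finset (Fin N)) ∩ (T : Finset (Fin N))).card ≤ m :=
    (card_le_card inter_subset_left).trans_eq S.2
  simp only [JZ, Matrix.zero_apply]
  rw [if_neg]
  omega

lemma JZ_zero (N m : ℕ) : JZ N m 0 = 1 := by
  ext S T
  simp only [JZ, Matrix.one_apply, add_zero]
  congr 1
  rw [eq_iff_iff]
  constructor
  · intro h
    have h' : ((S : Finset (Fin N)) ∩ (T : Finset (Fin N))).card = m := by exact_mod_cast h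
    have h1 := eq_of_subset_of_card_le (inter_subset_left (s₁ := S.1) (s₂ := T.1))
      (by rw [S.2, h'])
    have h2 := eq_of_subset_of_card_le (inter_subset_right (s₁ := S.1) (s₂ := T.1))
      (by rw [T.2, h'])
    exact Subtype.ext (h1.symm.trans h2)
  · rintro rfl
    simp [S.2]

/-- The entries of `B_1` count the pairs of elements `(x, y)` such that removing `x` from `S` and
then adding `y` produces `U`. -/
lemma B_one_apply {N m : ℕ} (U S : Omega N m) :
    ((B N m 1 U S : ℤ) : ℚ) = ∑ x ∈ S.1, ∑ y ∈ (S.1.erase x)ᶜ,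
      if insert y (S.1.erase x) = U.1 then (1 : ℚ) else 0 := by
  rw [Finset.sum_sigma', ← Finset.sum_filter, Finset.sum_const, nsmul_eq_mul, mul_one, B]
  norm_cast
  symm
  refine Finset.card_bij (fun p _ => ({p.1}, {p.2})) ?_ ?_ ?_
  · rintro ⟨x, y⟩ h
    simp only [mem_filter, mem_sigma, mem_compl] at h
    obtain ⟨⟨hx, hy⟩, h⟩ := h
    simp only [mem_filter, mem_univ, true_and, singleton_subset_iff, card_singleton,
      sdiff_singleton_eq_erase, singleton_inter_of_notMem hy]
    refine ⟨hx, ?_⟩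
    rw [union_comm, ← insert_eq, h]
  · rintro ⟨x, y⟩ _ ⟨x', y'⟩ _ h
    simpa using h
  · rintro ⟨X, Y⟩ h
    simp only [mem_filter, mem_univ, true_and] at h
    obtain ⟨hX, hX1, hXY, hY1, h⟩ := h
    obtain ⟨x, rfl⟩ := card_eq_one.1 hX1
    obtain ⟨y, rfl⟩ := card_eq_one.1 hY1
    rw [sdiff_singleton_eq_erase] at h hXY
    refine ⟨⟨x, y⟩, ?_, rfl⟩
    simp only [mem_filter, mem_sigma, mem_compl]
    refine ⟨⟨by simpa using hX, fun hy => ?_⟩, ?_⟩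
    · have : y ∈ ({y} : Finset (Fin N)) ∩ S.1.erase x := by simpa using hy
      rw [hXY] at this
      simp at this
    · rw [insert_eq, union_comm, h]

/-- Summing against a column of `B_1` is summing over single exchanges. -/
lemma sum_mul_B_one {N m : ℕ} (g : Finset (Fin N) → ℚ) (S : Omega N m) :
    ∑ U : Omega N m, g U.1 * ((B N m 1 U S : ℤ) : ℚ)
      = ∑ x ∈ S.1, ∑ y ∈ (S.1.erase x)ᶜ, g (insert y (S.1.erase x)) := by
  simp_rw [B_one_apply, Finset.mul_sum]
  rw [Finset.sum_comm]
  refine Finset.sum_congr rfl fun x hx => ?_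
  rw [Finset.sum_comm]
  refine Finset.sum_congr rfl fun y hy => ?_
  have hc : (insert y (S.1.erase x)).card = m := by
    rw [card_insert_of_notMem (mem_compl.1 hy), card_erase_add_one hx, S.2]
  rw [Finset.sum_eq_single (⟨insert y (S.1.erase x), hc⟩ : Omega N m)]
  · simp
  · intro U _ hU
    rw [if_neg, mul_zero]
    exact fun h => hU (Subtype.ext h.symm)
  · simp

lemma card_inter_exchange {N : ℕ} (T S : Finset (Fin N)) {x y : Fin N} (hx : x ∈ S)
    (hy : y ∉ S) :
    ((T ∩ insert y (S.erase x)).card : ℤ)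
      = (T ∩ S).card + (if y ∈ T then 1 else 0) - (if x ∈ T then 1 else 0) := by
  have h1 : ((T ∩ S.erase x).card : ℤ) = (T ∩ S).card - (if x ∈ T then 1 else 0) := by
    rw [inter_erase]
    split_ifs with h
    · rw [← card_erase_add_one (mem_inter.2 ⟨h, hx⟩)]
      simp
    · rw [erase_eq_of_notMem (by simp [h])]
      simp
  have h2 : ((T ∩ insert y (S.erase x)).card : ℤ)
      = (T ∩ S.erase x).card + (if y ∈ T then 1 else 0) := by
    split_ifs with h
    · rw [inter_insert_of_mem h, card_insert_of_notMem (by simp [hy])]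
      simp
    · rw [inter_insert_of_notMem h]
      simp
  rw [h2, h1]
  ring

lemma sum_ite_mem_eq {N : ℕ} (S T : Finset (Fin N)) (g : ℤ → ℚ) :
    ∑ x ∈ S, g (if x ∈ T then 1 else 0)
      = (T ∩ S).card * g 1 + ((S.card : ℚ) - (T ∩ S).card) * g 0 := by
  have h : ∀ x ∈ S, g (if x ∈ T then 1 else 0) = (if x ∈ T then 1 else 0) * (g 1 - g 0) + g 0 := by
    intro x _
    split_ifs <;> ring
  rw [Finset.sum_congr rfl h, Finset.sum_add_distrib, ← Finset.sum_mul, Finset.sum_boole,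
    Finset.filter_mem_eq_inter, Finset.sum_const, nsmul_eq_mul, inter_comm]
  ring

/-- The sum over all exchanges of a function of `|T ∩ ·|`, with the exchanges sorted by which of
the removed and the added element lie in `T`; here `a = |T ∩ S|`. -/
lemma sum_exchange {N m : ℕ} (f : ℤ → ℚ) (T S : Omega N m) (a : ℤ)
    (ha : ((T.1 ∩ S.1).card : ℤ) = a) :
    ∑ x ∈ S.1, ∑ y ∈ (S.1.erase x)ᶜ, f ((T.1 ∩ insert y (S.1.erase x)).card)
      = m * f a + a * ((m - a) * f a + (N - 2 * m + a) * f (a - 1))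
        + (m - a) * ((m - a) * f (a + 1) + (N - 2 * m + a) * f a) := by
  have haq : ((T.1 ∩ S.1).card : ℚ) = a := by rw [← ha]; simp
  have hc : ((S.1ᶜ).card : ℚ) = N - m := by
    have h := card_add_card_compl S.1
    rw [S.2, Fintype.card_fin] at h
    have h' : (m : ℚ) + (S.1ᶜ).card = N := by exact_mod_cast h
    linarith
  have hTc : ((T.1 ∩ S.1ᶜ).card : ℚ) = m - a := by
    have h := card_sdiff_add_card_inter T.1 S.1
    rw [T.2, sdiff_eq_inter_compl] at h
    have h' : ((T.1 ∩ S.1ᶜ).card : ℚ) + (T.1 ∩ S.1).card = m := by exact_mod_cast h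
    linarith
  have h : ∀ x ∈ S.1, ∑ y ∈ (S.1.erase x)ᶜ, f ((T.1 ∩ insert y (S.1.erase x)).card)
      = f a + ((m - a) * f (a + 1 - if x ∈ T.1 then 1 else 0)
        + (N - 2 * m + a) * f (a + 0 - if x ∈ T.1 then 1 else 0)) := by
    intro x hx
    rw [compl_erase, sum_insert (by simpa using hx), insert_erase hx, ha]
    congr 1
    rw [Finset.sum_congr rfl (g := fun y => (fun e : ℤ => f (a + e - if x ∈ T.1 then 1 else 0))
      (if y ∈ T.1 then 1 else 0)) fun y hy => by
        rw [card_inter_exchange T.1 S.1 hx (by simpa using hy), ha]]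
    rw [sum_ite_mem_eq S.1ᶜ T.1 (fun e : ℤ => f (a + e - if x ∈ T.1 then 1 else 0)), hTc, hc]
    ring
  rw [Finset.sum_congr rfl h, sum_ite_mem_eq S.1 T.1
    (fun e : ℤ => f a + ((m - a) * f (a + 1 - e) + (N - 2 * m + a) * f (a + 0 - e))), haq, S.2]
  simp only [add_sub_cancel_right, add_zero, sub_zero]
  ring

/-- The three-term recurrence of the Johnson scheme. -/
lemma JZ_mul_B (N m : ℕ) (i : ℤ) :
    JZ N m i * (B N m 1).map (Int.cast : ℤ → ℚ)
      = ((i : ℚ) + 1) ^ 2 • JZ N m (i + 1) + ((m : ℚ) + i * (N - 2 * i)) • JZ N m i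
        + (((m : ℚ) - i + 1) * (N - m - i + 1)) • JZ N m (i - 1) := by
  ext T S
  obtain ⟨a, ha⟩ : ∃ a : ℤ, ((T.1 ∩ S.1).card : ℤ) = a := ⟨_, rfl⟩
  have key := sum_mul_B_one (fun U => if ((T.1 ∩ U).card : ℤ) + i = m then (1 : ℚ) else 0) S
  rw [sum_exchange (fun b => if b + i = m then (1 : ℚ) else 0) T S a ha] at key
  simp only [Matrix.mul_apply, Matrix.map_apply, Matrix.add_apply, Matrix.smul_apply, smul_eq_mul]
  refine Eq.trans key ?_
  simp only [JZ, ha]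
  by_cases h0 : a + i = m
  · rw [if_pos h0, if_neg (by omega), if_neg (by omega), if_neg (by omega), if_neg (by omega)]
    have : (m : ℚ) = a + i := by exact_mod_cast h0.symm
    rw [this]; ring
  by_cases h1 : a + 1 + i = m
  · rw [if_neg h0, if_neg (by omega), if_pos h1, if_pos (by omega), if_neg (by omega)]
    have : (m : ℚ) = a + 1 + i := by exact_mod_cast h1.symm
    rw [this]; ring
  by_cases h2 : a - 1 + i = m
  · rw [if_neg h0, if_pos h2, if_neg h1, if_neg (by omega), if_pos (by omega)]
    have : (m : ℚ) = a - 1 + i := by exact_mod_cast h2.symm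
    rw [this]; ring
  · rw [if_neg h0, if_neg h2, if_neg h1, if_neg (by omega), if_neg (by omega)]
    ring

lemma choose_succ_mul_cast (m k : ℕ) :
    ((m.choose (k + 1) : ℕ) : ℚ) * (k + 1) = m.choose k * ((m : ℚ) - k) := by
  rcases le_or_gt k m with h | h
  · rw [← Nat.cast_sub h]
    exact_mod_cast Nat.choose_succ_right_eq m k
  · rw [Nat.choose_eq_zero_of_lt h, Nat.choose_eq_zero_of_lt (by omega)]
    simp

/-- `(-1)^k C(m,k)` satisfies the recurrence of `JZ_mul_B` with `B_1` replaced by `0`. -/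
lemma const_recurrence (N m k : ℕ) :
    ((k : ℚ) + 2) ^ 2 * ((-1) ^ (k + 2) * (m.choose (k + 2) : ℚ))
      = -(((m : ℚ) + (k + 1) * (N - 2 * (k + 1))) * ((-1) ^ (k + 1) * (m.choose (k + 1) : ℚ))
        + ((m : ℚ) - k) * (N - m - k) * ((-1) ^ k * (m.choose k : ℚ))) := by
  have h1 := choose_succ_mul_cast m k
  have h2 := choose_succ_mul_cast m (k + 1)
  push_cast at h2
  rw [pow_add, pow_succ]
  linear_combination (-1 : ℚ) ^ k * (k + 2) * h2 - (-1 : ℚ) ^ k * (N - m - k) * h1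

/-- For every `k` there is a polynomial `p` over `ℚ` with zero constant coefficient
such that `J_k = p(B_1) + (−1)^k C(m,k) • I` as Ω × Ω matrices over `ℚ`. -/
theorem perturbed_in_terms_of_modified_one (N m : ℕ) (hm : m ≤ N) (k : ℕ) :
    ∃ p : Polynomial ℚ, p.coeff 0 = 0 ∧
      (J N m k).map (Int.cast : ℤ → ℚ)
        = Polynomial.aeval ((B N m 1).map (Int.cast : ℤ → ℚ)) p
          + ((-1 : ℚ) ^ k * (m.choose k : ℚ)) • (1 : Matrix (Omega N m) (Omega N m) ℚ) := by
  simp only [← JZ_natCast]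
  induction k using Nat.twoStepInduction with
  | zero => exact ⟨0, by simp, by simp [JZ_zero]⟩
  | one =>
    refine ⟨Polynomial.X, by simp, ?_⟩
    have h := JZ_mul_B N m 0
    simp only [zero_sub, JZ_neg_one, JZ_zero, one_mul, zero_add, Int.cast_zero, zero_mul,
      add_zero, one_pow, one_smul, smul_zero] at h
    rw [Polynomial.aeval_X, h]
    simp
  | more k ih0 ih1 =>
    obtain ⟨p, hp, hJ0⟩ := ih0
    obtain ⟨q, hq, hJ1⟩ := ih1
    have h := JZ_mul_B N m ((k + 1 : ℕ) : ℤ)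
    rw [show ((k + 1 : ℕ) : ℤ) + 1 = ((k + 2 : ℕ) : ℤ) by push_cast; ring,
      show ((k + 1 : ℕ) : ℤ) - 1 = (k : ℤ) by push_cast; ring, hJ0, hJ1] at h
    have hne : ((k : ℚ) + 2) ^ 2 ≠ 0 := by positivity
    have hc := const_recurrence N m k
    set b := (B N m 1).map (Int.cast : ℤ → ℚ)
    set c0 : ℚ := (-1) ^ k * (m.choose k : ℚ)
    set c1 : ℚ := (-1) ^ (k + 1) * (m.choose (k + 1) : ℚ)
    set c2 : ℚ := (-1) ^ (k + 2) * (m.choose (k + 2) : ℚ)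
    set β : ℚ := (m : ℚ) + (k + 1) * (N - 2 * (k + 1)) with hβ
    set γ : ℚ := ((m : ℚ) - k) * (N - m - k) with hγ
    refine ⟨(((k : ℚ) + 2) ^ 2)⁻¹ • (q * Polynomial.X + c1 • Polynomial.X - β • q - γ • p),
      by simp [hp, hq], ?_⟩
    refine smul_right_injective _ hne ?_
    simp only [smul_add, map_smul, map_sub, map_add, map_mul, Polynomial.aeval_X,
      smul_inv_smul₀ hne]
    rw [smul_smul, hc]
    have e1 : (m : ℚ) + (((k + 1 : ℕ) : ℤ) : ℚ) * (N - 2 * (((k + 1 : ℕ) : ℤ) : ℚ)) = β := by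
      rw [hβ]; push_cast; ring
    have e2 : ((m : ℚ) - (((k + 1 : ℕ) : ℤ) : ℚ) + 1) * (N - m - (((k + 1 : ℕ) : ℤ) : ℚ) + 1)
        = γ := by
      rw [hγ]; push_cast; ring
    have e3 : ((((k + 1 : ℕ) : ℤ) : ℚ) + 1) ^ 2 = ((k : ℚ) + 2) ^ 2 := by push_cast; ring
    rw [e1, e2, e3, add_mul, smul_mul_assoc, one_mul] at h
    rw [h]
    module
end

section
/- Let P and Q be multisets of simple graphs on Fin n in which every member has exactly m edges. If the modified 1-decks of P and Q agree up to isomorphism (i.e. the multiset unions of MD_1 over the members of P and of Q have equal images under the quotient map to isomorphism classes), then for every natural number k ≥ 1 the modified k-decks of P and Q also agree up to isomorphism. -/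
/-!
On linear combinations of `m`-edge graphs, the modified `k`-deck is a linear operator `MD_k`: its
entry at a pair of `m`-edge graphs `G`, `H` is `C(|E(G) ∩ E(H)|, m - k)`, because a way of reaching
`H` from `G` is determined by the set of `m - k` edges kept (`sum_modified`). With `N = C(n, 2)`
these operators satisfy

  `MD_k ∘ MD_1 = (k + 1) ^ 2 MD_{k+1} + c MD_k`,  `c = N k + m - m ^ 2 + (m - k) ^ 2 - (m - k)`

for `k + 1 ≤ m`. Indeed, the left side is evaluated by sorting the exchanges `G - e + f` according to
whether `e` and `f` lie in `H` (`sum_swaps`), and the outcome is an identity between binomial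
coefficients in which the size of the intersection drops out of `c` (`choose_identity`).

All operators commute with isomorphism, so if `MD_1 P` and `MD_1 Q` agree up to isomorphism, then so
do `MD_k (MD_1 P)` and `MD_k (MD_1 Q)`; if moreover `MD_k P` and `MD_k Q` agree, the recursion yields
the agreement of `MD_{k+1} P` and `MD_{k+1} Q` after cancelling `(k + 1) ^ 2`. Induction on `k`
finishes the proof, the decks being empty for `k > m`. Agreement up to isomorphism is expressed by
equality of the sums of all isomorphism-invariant integer functions `φ`, which accommodates the
possibly negative constant `c`.
-/

open Finset

noncomputable section
open scoped Classical

/-! ### Exchanges in a family of `m`-subsets -/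

/-- The sets `X` counted here correspond to the `(m - k)`-subsets `G \ X` of `G ∩ H`. -/
theorem choose_count {α : Type*} [DecidableEq α]
    (G H : Finset α) (m k : ℕ) (hG : #G = m) (hk : k ≤ m) :
    #{X ∈ G.powersetCard k | G \ X ⊆ H} = (#(G ∩ H)).choose (m - k) := by
  rw [← card_powersetCard]
  refine card_nbij' (fun X => G \ X) (fun Z => G \ Z) ?_ ?_ ?_ ?_
  · intro X hX
    simp only [coe_filter, mem_powersetCard, Set.mem_ofPred_eq, mem_coe] at hX ⊢
    refine ⟨subset_inter sdiff_subset hX.2, ?_⟩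
    rw [card_sdiff_of_subset hX.1.1, hG, hX.1.2]
  · intro Z hZ
    simp only [coe_filter, mem_powersetCard, Set.mem_ofPred_eq, mem_coe] at hZ ⊢
    have hZG : Z ⊆ G := hZ.1.trans inter_subset_left
    refine ⟨⟨sdiff_subset, ?_⟩, ?_⟩
    · rw [card_sdiff_of_subset hZG, hG, hZ.2]; omega
    · rw [Finset.sdiff_sdiff_eq_self hZG]; exact hZ.1.trans inter_subset_right
  · intro X hX
    simp only [coe_filter, mem_powersetCard, Set.mem_ofPred_eq] at hX
    exact Finset.sdiff_sdiff_eq_self hX.1.1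
  · intro Z hZ
    simp only [mem_powersetCard, mem_coe] at hZ
    exact Finset.sdiff_sdiff_eq_self (hZ.1.trans inter_subset_left)

theorem sum_extensions {α : Type*} [DecidableEq α]
    (T Z : Finset α) (m k : ℕ) (hZ : Z ⊆ T) (hc : #Z + k = m)
    (φ : Finset α → ℤ) :
    ∑ Y ∈ (T \ Z).powersetCard k, φ (Z ∪ Y) =
      ∑ H ∈ T.powersetCard m, if Z ⊆ H then φ H else 0 := by
  rw [← sum_filter]
  refine sum_nbij' (fun Y => Z ∪ Y) (fun H => H \ Z) ?_ ?_ ?_ ?_ ?_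
  · intro Y hY
    simp only [mem_filter, mem_powersetCard] at hY ⊢
    have hd : Disjoint Z Y := disjoint_of_subset_right hY.1 disjoint_sdiff
    refine ⟨⟨union_subset hZ (hY.1.trans sdiff_subset), ?_⟩, subset_union_left⟩
    rw [card_union_of_disjoint hd, hY.2, hc]
  · intro H hH
    simp only [mem_filter, mem_powersetCard] at hH ⊢
    refine ⟨sdiff_subset_sdiff hH.1.1 le_rfl, ?_⟩
    rw [card_sdiff_of_subset hH.2]; omega
  · intro Y hY
    simp only [mem_powersetCard] at hY
    have hd : Disjoint Z Y := disjoint_of_subset_right hY.1 disjoint_sdiff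
    exact union_sdiff_cancel_left hd
  · intro H hH
    simp only [mem_filter] at hH
    exact union_sdiff_of_subset hH.2
  · intros; rfl

/-- The number of ways to turn `G` into a given `m`-set `H ⊆ T` by deleting `k` elements and then
adding `k` elements absent from the remainder is `C(|G ∩ H|, m - k)`. -/
theorem sum_modified {α : Type*} [DecidableEq α]
    (T G : Finset α) (m k : ℕ) (hT : G ⊆ T) (hG : #G = m)
    (hk : k ≤ m) (φ : Finset α → ℤ) :
    ∑ X ∈ G.powersetCard k, ∑ Y ∈ (T \ (G \ X)).powersetCard k, φ ((G \ X) ∪ Y) =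
      ∑ H ∈ T.powersetCard m, ((#(G ∩ H)).choose (m - k) : ℤ) * φ H := by
  have h1 : ∀ X ∈ G.powersetCard k, ∑ Y ∈ (T \ (G \ X)).powersetCard k, φ ((G \ X) ∪ Y) =
      ∑ H ∈ T.powersetCard m, if G \ X ⊆ H then φ H else 0 := by
    intro X hX
    rw [mem_powersetCard] at hX
    refine sum_extensions T _ m k (sdiff_subset.trans hT) ?_ φ
    rw [card_sdiff_of_subset hX.1]; omega
  rw [sum_congr rfl h1, sum_comm]
  refine sum_congr rfl fun H _ => ?_
  rw [← sum_filter, sum_const, choose_count G H m k hG hk, nsmul_eq_mul]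

/-- The arithmetic behind the recursion between modified decks, with `t = |G ∩ H|`. The point is that
the coefficient of `C(t, j + 1)` on the right does not depend on `t`. -/
theorem choose_identity (t j : ℕ) (m N : ℤ) :
    m * (t.choose (j+1) : ℤ) + t * (m - t) * t.choose (j+1) +
      t * (N - 2 * m + t) * (t - 1).choose (j+1) +
      (m - t) * (m - t) * (t + 1).choose (j+1) + (m - t) * (N - 2 * m + t) * t.choose (j+1) =
    (m - j) ^ 2 * t.choose j +
      (N * (m - (j + 1)) + m - m ^ 2 + (j + 1) ^ 2 - (j + 1)) * t.choose (j+1) := by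
  have h1 : ((t + 1).choose (j+1) : ℤ) = t.choose j + t.choose (j+1) := by
    exact_mod_cast Nat.choose_succ_succ t j
  have h2 : (t.choose j : ℤ) * (t - j) = (j + 1) * t.choose (j+1) := by
    rcases le_or_gt j t with h | h
    · have := Nat.choose_succ_right_eq t j
      have h' : ((t - j : ℕ) : ℤ) = t - j := by push_cast [h]; ring
      rw [← h']; exact_mod_cast by linarith
    · simp [Nat.choose_eq_zero_of_lt h, Nat.choose_eq_zero_of_lt (h.trans (Nat.lt_succ_self j))]
  have h3 : (t : ℤ) * (t - 1).choose (j+1) = (t - (j + 1)) * t.choose (j+1) := by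
    cases t with
    | zero => simp
    | succ s =>
      have e1 : ((s + 1).choose (j+1) : ℤ) = s.choose j + s.choose (j+1) := by
        exact_mod_cast Nat.choose_succ_succ s j
      have e2 : ((s + 1 : ℕ) : ℤ) * s.choose j = (s + 1).choose (j+1) * (j + 1) := by
        exact_mod_cast Nat.add_one_mul_choose_eq s j
      simp only [Nat.add_sub_cancel]
      push_cast at e2 ⊢
      linear_combination -e2 - (s + 1 : ℤ) * e1
  rw [h1]
  linear_combination (N - 2 * m + t) * h3 - (2 * m - t - j) * h2

/-- Sum, over all exchanges `G - e + f` (with `f = e` allowed), of a function of `|(G - e + f) ∩ H|`.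
The terms on the right are the cases `f = e`, then `e ∈ H, f ∈ H`, then `e ∈ H, f ∉ H`, then
`e ∉ H, f ∈ H`, then `e ∉ H, f ∉ H`. The truncated subtraction is harmless, since that term carries
the factor `|G ∩ H|`. -/
theorem sum_swaps {α : Type*} [DecidableEq α]
    (T G H : Finset α) (m : ℕ) (hT : G ⊆ T) (hHT : H ⊆ T)
    (hG : #G = m) (hH : #H = m) (g : ℕ → ℤ) :
    ∑ e ∈ G, ∑ f ∈ T \ (G \ {e}), g #(((G \ {e}) ∪ {f}) ∩ H) =
      m * g #(G ∩ H) + #(G ∩ H) * (m - #(G ∩ H)) * g #(G ∩ H)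
      + #(G ∩ H) * (#T - 2 * m + #(G ∩ H)) * g (#(G ∩ H) - 1)
      + (m - #(G ∩ H)) * (m - #(G ∩ H)) * g (#(G ∩ H) + 1)
      + (m - #(G ∩ H)) * (#T - 2 * m + #(G ∩ H)) * g #(G ∩ H) := by
  set t := #(G ∩ H) with ht
  have cGH : (#(G \ H) : ℤ) = m - t := by
    have := card_sdiff_add_card_inter G H; omega
  have cHG : (#(H \ G) : ℤ) = m - t := by
    have := card_sdiff_add_card_inter H G; rw [inter_comm] at this; omega
  have cT : (#(T \ (G ∪ H)) : ℤ) = #T - 2 * m + t := by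
    have h1 := card_sdiff_add_card_eq_card (union_subset hT hHT)
    have h2 := card_union_add_card_inter G H
    omega
  have split : ∀ e ∈ G, ∑ f ∈ T \ (G \ {e}), g #(((G \ {e}) ∪ {f}) ∩ H) =
      g t + (m - t) * g (#((G \ {e}) ∩ H) + 1) + (#T - 2 * m + t) * g #((G \ {e}) ∩ H) := by
    intro e he
    have hset : T \ (G \ {e}) = insert e ((H \ G) ∪ (T \ (G ∪ H))) := by
      ext f; simp only [mem_sdiff, mem_insert, mem_union, mem_singleton]
      have h1 := @hT f; have h2 := @hHT f
      by_cases hfe : f = e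
      · subst hfe; simp [he, h1 he]
      · simp only [hfe]; tauto
    have hd : Disjoint (H \ G) (T \ (G ∪ H)) := by
      rw [disjoint_left]; intro f; simp only [mem_sdiff, mem_union]; tauto
    rw [hset, sum_insert (by simp [he]), sum_union hd]
    have a0 : (G \ {e}) ∪ {e} = G := sdiff_union_of_subset (by simpa using he)
    have a1 : ∀ f ∈ H \ G, g #(((G \ {e}) ∪ {f}) ∩ H) = g (#((G \ {e}) ∩ H) + 1) := by
      intro f hf
      rw [mem_sdiff] at hf
      rw [union_inter_distrib_right, singleton_inter_of_mem hf.1, card_union_of_disjoint]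
      · simp
      · simp [hf.2]
    have a2 : ∀ f ∈ T \ (G ∪ H), g #(((G \ {e}) ∪ {f}) ∩ H) = g #((G \ {e}) ∩ H) := by
      intro f hf
      rw [mem_sdiff, mem_union, not_or] at hf
      rw [union_inter_distrib_right, singleton_inter_of_notMem hf.2.2, union_empty]
    rw [a0, sum_congr rfl a1, sum_congr rfl a2, sum_const, sum_const, nsmul_eq_mul, nsmul_eq_mul,
      cHG, cT, ← ht]
    ring
  rw [sum_congr rfl split]
  have hG2 : G = (G ∩ H) ∪ (G \ H) := by rw [union_comm, sdiff_union_inter]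
  have b1 : ∀ e ∈ G ∩ H, g t + (m - t) * g (#((G \ {e}) ∩ H) + 1)
      + (#T - 2 * m + t) * g #((G \ {e}) ∩ H) =
      g t + (m - t) * g t + (#T - 2 * m + t) * g (t - 1) := by
    intro e he
    have : #((G \ {e}) ∩ H) = t - 1 := by
      rw [sdiff_singleton_eq_erase, erase_inter, card_erase_of_mem he]
    have hpos : 0 < t := card_pos.2 ⟨e, he⟩
    rw [this, Nat.sub_add_cancel hpos]
  have b2 : ∀ e ∈ G \ H, g t + (m - t) * g (#((G \ {e}) ∩ H) + 1)
      + (#T - 2 * m + t) * g #((G \ {e}) ∩ H) =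
      g t + (m - t) * g (t + 1) + (#T - 2 * m + t) * g t := by
    intro e he
    have : #((G \ {e}) ∩ H) = t := by
      rw [sdiff_singleton_eq_erase, erase_inter, erase_eq_of_notMem]
      rw [mem_sdiff] at he; simp [he.2]
    rw [this]
  have hs : ∀ F : α → ℤ, ∑ e ∈ G, F e = ∑ e ∈ G ∩ H, F e + ∑ e ∈ G \ H, F e := by
    intro F
    rw [← sum_union (disjoint_sdiff_inter G H).symm, ← hG2]
  rw [hs, sum_congr rfl b1, sum_congr rfl b2, sum_const, sum_const, nsmul_eq_mul, nsmul_eq_mul,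
    cGH, ← ht]
  ring

/-- The recursion at the level of set systems, entry by entry: one exchange followed by the passage to
the modified `k`-deck is `(k + 1) ^ 2` times the modified `(k + 1)`-deck plus a multiple, depending
only on `|T|`, `m` and `k`, of the modified `k`-deck. -/
theorem sum_swaps_choose {α : Type*} [DecidableEq α]
    (T G H : Finset α) (m k : ℕ) (hT : G ⊆ T) (hHT : H ⊆ T)
    (hG : #G = m) (hH : #H = m) (hk : k + 1 ≤ m) :
    ∑ X ∈ G.powersetCard 1, ∑ Y ∈ (T \ (G \ X)).powersetCard 1,
      ((#(((G \ X) ∪ Y) ∩ H)).choose (m - k) : ℤ) =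
    (k + 1) ^ 2 * (#(G ∩ H)).choose (m - (k + 1)) +
      (#T * k + m - m ^ 2 + (m - k) ^ 2 - (m - k)) * (#(G ∩ H)).choose (m - k) := by
  obtain ⟨j, rfl⟩ := Nat.exists_eq_add_of_le' hk
  have e1 : j + (k + 1) - k = j + 1 := by omega
  have e2 : j + (k + 1) - (k + 1) = j := by omega
  simp only [powersetCard_one, sum_map, Function.Embedding.coeFn_mk, e1, e2]
  have := sum_swaps T G H _ hT hHT hG hH (fun t => (t.choose (j + 1) : ℤ))
  have h2 := choose_identity #(G ∩ H) j ((j + (k + 1) : ℕ) : ℤ) #T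
  refine (this.trans h2).trans ?_
  push_cast
  ring

/-! ### Sums over modified decks of graphs -/

theorem compl_deleteEdges_edgeFinset {n : ℕ} (G : SimpleGraph (Fin n))
    (X : Finset (Sym2 (Fin n))) :
    (G.deleteEdges (X : Set (Sym2 (Fin n))))ᶜ.edgeFinset =
      (⊤ : SimpleGraph (Fin n)).edgeFinset \ (G.edgeFinset \ X) := by
  ext e
  induction e with
  | _ a b =>
    simp only [SimpleGraph.mem_edgeFinset, SimpleGraph.mem_edgeSet, SimpleGraph.compl_adj,
      SimpleGraph.deleteEdges_adj, mem_sdiff, SimpleGraph.top_adj, mem_coe, ne_eq]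

theorem edgeFinset_subset_top {n : ℕ} (G : SimpleGraph (Fin n)) :
    G.edgeFinset ⊆ (⊤ : SimpleGraph (Fin n)).edgeFinset :=
  SimpleGraph.edgeFinset_mono le_top

/-- An arbitrary `Fintype` instance is allowed, so that the lemma rewrites `edgeFinset`s elaborated with
different instances. -/
theorem edgeFinset_fromEdgeSet_of_subset {n : ℕ} (E : Finset (Sym2 (Fin n)))
    (hE : E ⊆ (⊤ : SimpleGraph (Fin n)).edgeFinset)
    [Fintype (SimpleGraph.fromEdgeSet (E : Set (Sym2 (Fin n)))).edgeSet] :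
    (SimpleGraph.fromEdgeSet (E : Set (Sym2 (Fin n)))).edgeFinset = E := by
  ext e
  have h := @hE e
  induction e with
  | _ a b =>
    simp only [SimpleGraph.mem_edgeFinset, SimpleGraph.mem_edgeSet, SimpleGraph.top_adj] at h
    simp only [SimpleGraph.mem_edgeFinset, SimpleGraph.mem_edgeSet,
      SimpleGraph.fromEdgeSet_adj, mem_coe]
    tauto

theorem sum_map_MD {n : ℕ} (k : ℕ) (G : SimpleGraph (Fin n)) (φ : SimpleGraph (Fin n) → ℤ) :
    ((MD k G).map φ).sum =
      ∑ X ∈ G.edgeFinset.powersetCard k,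
        ∑ Y ∈ ((⊤ : SimpleGraph (Fin n)).edgeFinset \ (G.edgeFinset \ X)).powersetCard k,
          φ (SimpleGraph.fromEdgeSet
            (((G.edgeFinset \ X) ∪ Y : Finset (Sym2 (Fin n))) : Set (Sym2 (Fin n)))) := by
  unfold MD
  rw [Multiset.map_bind, Multiset.sum_bind, Finset.sum]
  congr 1
  refine Multiset.map_congr rfl fun X _ => ?_
  rw [Multiset.map_map, compl_deleteEdges_edgeFinset]
  rfl

/-- The sum of `φ` over the modified `k`-deck of `G`, in closed form, when `G` has `m` edges and
`k ≤ m`. The `m`-edge graphs are indexed by their edge sets `E`. The formula makes sense for every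
`G`, so that its isomorphism invariance needs no hypothesis on the number of edges. -/
def deckWeight {n : ℕ} (m k : ℕ) (φ : SimpleGraph (Fin n) → ℤ) (G : SimpleGraph (Fin n)) : ℤ :=
  ∑ E ∈ (⊤ : SimpleGraph (Fin n)).edgeFinset.powersetCard m,
    ((#(G.edgeFinset ∩ E)).choose (m - k) : ℤ) *
      φ (SimpleGraph.fromEdgeSet (E : Set (Sym2 (Fin n))))

theorem sum_map_MD_eq_deckWeight {n : ℕ} (m k : ℕ) (hk : k ≤ m) (G : SimpleGraph (Fin n))
    (hG : #G.edgeFinset = m) (φ : SimpleGraph (Fin n) → ℤ) :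
    ((MD k G).map φ).sum = deckWeight m k φ G := by
  rw [sum_map_MD]
  exact sum_modified _ _ m k (edgeFinset_subset_top G) hG hk
    (fun E => φ (SimpleGraph.fromEdgeSet (E : Set (Sym2 (Fin n)))))

/-- The recursion `MD_k ∘ MD_1 = (k + 1) ^ 2 MD_{k+1} + c MD_k` on `m`-edge graphs,
tested against `φ`. -/
theorem sum_map_MD_one_deckWeight {n : ℕ} (m k : ℕ) (hk : k + 1 ≤ m) (G : SimpleGraph (Fin n))
    (hG : #G.edgeFinset = m) (φ : SimpleGraph (Fin n) → ℤ) :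
    ((MD 1 G).map (deckWeight m k φ)).sum =
      (k + 1) ^ 2 * deckWeight m (k + 1) φ G +
      (#(⊤ : SimpleGraph (Fin n)).edgeFinset * k + m - m ^ 2 + (m - k) ^ 2 - (m - k)) *
        deckWeight m k φ G := by
  set T := (⊤ : SimpleGraph (Fin n)).edgeFinset with hTdef
  have hGT := edgeFinset_subset_top G
  rw [sum_map_MD]
  have h1 : ∀ X ∈ G.edgeFinset.powersetCard 1,
      ∑ Y ∈ (T \ (G.edgeFinset \ X)).powersetCard 1,
        deckWeight m k φ (SimpleGraph.fromEdgeSet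
          (((G.edgeFinset \ X) ∪ Y : Finset (Sym2 (Fin n))) : Set (Sym2 (Fin n)))) =
      ∑ E ∈ T.powersetCard m, ∑ Y ∈ (T \ (G.edgeFinset \ X)).powersetCard 1,
        ((#(((G.edgeFinset \ X) ∪ Y) ∩ E)).choose (m - k) : ℤ) *
          φ (SimpleGraph.fromEdgeSet (E : Set (Sym2 (Fin n)))) := by
    intro X _
    rw [sum_comm]
    refine sum_congr rfl fun Y hY => ?_
    rw [mem_powersetCard] at hY
    rw [deckWeight, edgeFinset_fromEdgeSet_of_subset]
    exact union_subset (sdiff_subset.trans hGT) (hY.1.trans sdiff_subset)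
  rw [sum_congr rfl h1, sum_comm, deckWeight, deckWeight, mul_sum, mul_sum, ← sum_add_distrib]
  refine sum_congr rfl fun E hE => ?_
  rw [mem_powersetCard] at hE
  simp_rw [← sum_mul]
  rw [sum_swaps_choose T G.edgeFinset E m k hGT hE.1 hG hE.2 hk]
  ring

/-! ### Passing to isomorphism classes -/

theorem deckWeight_congr {n : ℕ} (m k : ℕ) (φ : SimpleGraph (Fin n) → ℤ)
    (hφ : ∀ G H : SimpleGraph (Fin n), Nonempty (G ≃g H) → φ G = φ H)
    (G H : SimpleGraph (Fin n)) (h : Nonempty (G ≃g H)) :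
    deckWeight m k φ G = deckWeight m k φ H := by
  obtain ⟨σ⟩ := h
  let τ : Sym2 (Fin n) ≃ Sym2 (Fin n) :=
    { toFun := Sym2.map σ
      invFun := Sym2.map σ.symm
      left_inv := fun e => by induction e with | _ a b => simp [Sym2.map_mk]
      right_inv := fun e => by induction e with | _ a b => simp [Sym2.map_mk] }
  have hτ : ∀ a b, τ s(a, b) = s(σ a, σ b) := fun a b => rfl
  have hmap : G.edgeFinset.map τ.toEmbedding = H.edgeFinset := by
    ext e
    rw [mem_map_equiv]
    obtain ⟨e, rfl⟩ := τ.surjective e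
    rw [Equiv.symm_apply_apply]
    induction e with
    | _ a b =>
      rw [hτ]
      simp only [SimpleGraph.mem_edgeFinset, SimpleGraph.mem_edgeSet]
      exact σ.map_rel_iff.symm
  have hT : ∀ e, τ e ∈ (⊤ : SimpleGraph (Fin n)).edgeFinset ↔
      e ∈ (⊤ : SimpleGraph (Fin n)).edgeFinset := by
    intro e
    induction e with
    | _ a b =>
      rw [hτ]
      simp only [SimpleGraph.mem_edgeFinset, SimpleGraph.mem_edgeSet, SimpleGraph.top_adj, ne_eq,
        EmbeddingLike.apply_eq_iff_eq]
  unfold deckWeight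
  -- reindex the sum over `E` by the permutation of pairs induced by the isomorphism
  refine sum_equiv τ.finsetCongr ?_ ?_
  · intro E
    simp only [mem_powersetCard, Equiv.finsetCongr_apply, card_map]
    refine and_congr_left fun _ => ?_
    constructor
    · intro hE e he
      rw [mem_map] at he
      obtain ⟨e, he, rfl⟩ := he
      exact (hT e).2 (hE he)
    · intro hE e he
      exact (hT e).1 (hE (mem_map_of_mem _ he))
  · intro E _
    rw [Equiv.finsetCongr_apply, ← hmap, ← map_inter, card_map]
    congr 1
    refine hφ _ _ ⟨⟨σ.toEquiv, ?_⟩⟩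
    intro a b
    simp only [SimpleGraph.fromEdgeSet_adj, mem_coe, mem_map_equiv, ne_eq,
      EmbeddingLike.apply_eq_iff_eq]
    have : τ.symm s(σ a, σ b) = s(a, b) := by rw [← hτ, Equiv.symm_apply_apply]
    exact and_congr_left fun _ => by rw [← this]; rfl

theorem sum_eq_of_map_isoClass_eq {n : ℕ} (S R : Multiset (SimpleGraph (Fin n)))
    (h : S.map isoClass = R.map isoClass) (ψ : SimpleGraph (Fin n) → ℤ)
    (hψ : ∀ G H : SimpleGraph (Fin n), Nonempty (G ≃g H) → ψ G = ψ H) :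
    (S.map ψ).sum = (R.map ψ).sum := by
  have := congrArg (fun M => (M.map (Quotient.lift (s := isoSetoid n) ψ hψ)).sum) h
  simp only [Multiset.map_map] at this
  exact this

/-- Isomorphism-invariant test functions separate multisets of isomorphism classes: take indicators of
classes. -/
theorem map_isoClass_eq_of_sum_eq {n : ℕ} (S R : Multiset (SimpleGraph (Fin n)))
    (h : ∀ ψ : SimpleGraph (Fin n) → ℤ,
      (∀ G H : SimpleGraph (Fin n), Nonempty (G ≃g H) → ψ G = ψ H) →
      (S.map ψ).sum = (R.map ψ).sum) :
    S.map isoClass = R.map isoClass := by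
  ext c
  have key : ∀ M : Multiset (SimpleGraph (Fin n)),
      ((M.map isoClass).count c : ℤ) =
        (M.map fun G => if isoClass G = c then (1 : ℤ) else 0).sum := by
    intro M
    induction M using Multiset.induction_on with
    | empty => simp
    | cons G M ih =>
      rw [Multiset.map_cons, Multiset.map_cons, Multiset.sum_cons, Multiset.count_cons, ← ih]
      push_cast
      simp only [eq_comm (a := c)]
      ring
  have h2 := h (fun G => if isoClass G = c then (1 : ℤ) else 0) (by
    intro G H hGH
    have : isoClass G = isoClass H := Quotient.sound (s := isoSetoid n) hGH
    simp only [this])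
  rw [← key, ← key] at h2
  exact_mod_cast h2

theorem MD_eq_zero {n : ℕ} (k : ℕ) (G : SimpleGraph (Fin n)) (h : #G.edgeFinset < k) :
    MD k G = 0 := by
  unfold MD
  rw [powersetCard_eq_empty.2 h]
  rfl

/-- If the modified `1`-decks of two collections of `m`-edge graphs agree up to
isomorphism, then so do their modified `k`-decks for every `k ≥ 1`. -/
theorem modified_decks_determined_by_modified_one_deck (n m : ℕ)
    (P Q : Multiset (SimpleGraph (Fin n)))
    (hP : ∀ G ∈ P, G.edgeFinset.card = m) (hQ : ∀ G ∈ Q, G.edgeFinset.card = m)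
    (h : (P.bind (MD 1)).map isoClass = (Q.bind (MD 1)).map isoClass)
    (k : ℕ) (hk : 1 ≤ k) :
    (P.bind (MD k)).map isoClass = (Q.bind (MD k)).map isoClass := by
  induction k, hk using Nat.le_induction with
  | base => exact h
  | succ k hk ih =>
    by_cases hkm : k + 1 ≤ m
    · refine map_isoClass_eq_of_sum_eq _ _ fun φ hφ => ?_
      have e1 := sum_eq_of_map_isoClass_eq _ _ h (deckWeight m k φ) (deckWeight_congr m k φ hφ)
      have e2 := sum_eq_of_map_isoClass_eq _ _ ih φ hφ
      have toWeight : ∀ R : Multiset (SimpleGraph (Fin n)),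
          (∀ G ∈ R, G.edgeFinset.card = m) → ∀ i ≤ m,
          ((R.bind (MD i)).map φ).sum = (R.map (deckWeight m i φ)).sum := by
        intro R hR i hi
        rw [Multiset.map_bind, Multiset.sum_bind]
        congr 1
        exact Multiset.map_congr rfl fun G hG => sum_map_MD_eq_deckWeight m i hi G (hR G hG) φ
      have recur : ∀ R : Multiset (SimpleGraph (Fin n)),
          (∀ G ∈ R, G.edgeFinset.card = m) →
          ((R.bind (MD 1)).map (deckWeight m k φ)).sum =
            (k + 1) ^ 2 * (R.map (deckWeight m (k + 1) φ)).sum +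
            (#(⊤ : SimpleGraph (Fin n)).edgeFinset * k + m - m ^ 2 + (m - k) ^ 2 - (m - k)) *
              (R.map (deckWeight m k φ)).sum := by
        intro R hR
        rw [Multiset.map_bind, Multiset.sum_bind, ← Multiset.sum_map_mul_left,
          ← Multiset.sum_map_mul_left, ← Multiset.sum_map_add]
        congr 1
        exact Multiset.map_congr rfl fun G hG =>
          sum_map_MD_one_deckWeight m k hkm G (hR G hG) φ
      have hk' : k ≤ m := by omega
      rw [toWeight P hP k hk', toWeight Q hQ k hk'] at e2
      rw [toWeight P hP _ hkm, toWeight Q hQ _ hkm]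
      rw [recur P hP, recur Q hQ, e2] at e1
      have hne : ((k : ℤ) + 1) ^ 2 ≠ 0 := by positivity
      exact mul_left_cancel₀ hne (add_right_cancel e1)
    · -- both decks are empty: no member has `k + 1` edges to delete
      have hz : ∀ R : Multiset (SimpleGraph (Fin n)),
          (∀ G ∈ R, G.edgeFinset.card = m) → R.bind (MD (k + 1)) = 0 := by
        intro R hR
        rw [Multiset.bind_congr (g := fun _ => 0), Multiset.bind_zero]
        refine fun G hG => MD_eq_zero _ _ ?_
        rw [hR G hG]; omega
      rw [hz P hP, hz Q hQ]

end
end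

section
/- (Lovász's result for collections, edge-deck form.) Let N = C(n,2) and suppose 2m > N. Let P and Q be multisets of simple graphs on Fin n in which every member has exactly m edges. If the 1-edge decks of P and Q agree up to isomorphism (i.e. the multiset unions of ED_1 over the members of P and of Q have equal images under the quotient map to isomorphism classes), then P and Q are equal up to isomorphism (the multisets of isomorphism classes of the members of P and of Q coincide). -/
/-!
For a set `T` of vertex pairs and a graph `G` let `emb T G` count the vertex permutations carrying
`T` into `E(G)`; this is an isomorphism invariant of `G`. The proof is Lovász's inclusion–exclusion
argument applied to the sums of `emb T` over the two collections.

* If `|T| < m`, these sums agree (`sum_emb_eq_of_card_lt`): summing `emb T` over the edge deck of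
  an `m`-edge graph `G` gives `(m - |T|) * emb T G` (`sum_emb_ED`), and `m - |T| ≠ 0`.
* For `m`-edge graphs `H` and `G`, the alternating sum of `emb T G` over `T ⊆ E(H)` counts the
  permutations placing `H` disjointly from `G`; it vanishes since `2m > C(n,2)`
  (`alternating_sum_emb`). Hence the sums of `emb E(H)` agree as well (`sum_emb_edgeFinset_eq`).
* The sum of `emb E(H)` over a collection of `m`-edge graphs is the multiplicity of the
  isomorphism class of `H` times `emb E(H) H > 0` (`sum_emb_edgeFinset`), so all multiplicities
  agree.
-/

open Finset

noncomputable section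
open scoped Classical

/-- The number of permutations `σ` of the vertices that carry every pair of `T` to an edge of `G`.
It is kept in `ℤ` because it enters alternating sums. -/
def emb {n : ℕ} (T : Finset (Sym2 (Fin n))) (G : SimpleGraph (Fin n)) : ℤ :=
  ∑ σ : Equiv.Perm (Fin n), if ∀ e ∈ T, Sym2.map σ e ∈ G.edgeSet then 1 else 0

lemma emb_congr {n : ℕ} (T : Finset (Sym2 (Fin n))) {G G' : SimpleGraph (Fin n)}
    (h : Nonempty (G ≃g G')) : emb T G = emb T G' := by
  obtain ⟨φ⟩ := h
  unfold emb
  refine Fintype.sum_equiv (Equiv.mulLeft (φ.toEquiv : Equiv.Perm (Fin n))) _ _ fun σ => ?_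
  have key : ∀ e : Sym2 (Fin n), Sym2.map σ e ∈ G.edgeSet ↔
      Sym2.map ((Equiv.mulLeft (φ.toEquiv : Equiv.Perm (Fin n))) σ) e ∈ G'.edgeSet := by
    intro e
    induction e using Sym2.ind with
    | _ a b => simpa using (φ.map_adj_iff (v := σ a) (w := σ b)).symm
  simp only [key]

/-- Double counting: an embedding of `T` into `G` survives the deletion of an edge `e` exactly
when `e` is outside the image of `T`, which leaves `|E(G)| - |T|` choices of `e`. -/
lemma sum_emb_ED {n : ℕ} (T : Finset (Sym2 (Fin n))) (G : SimpleGraph (Fin n)) :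
    ((ED 1 G).map (emb T)).sum = ((G.edgeFinset.card : ℤ) - T.card) * emb T G := by
  have h1 : ((ED 1 G).map (emb T)).sum
      = ∑ e ∈ G.edgeFinset, emb T (G.deleteEdges {e}) := by
    simp [ED, Finset.powersetCard_one, Multiset.map_map]
  rw [h1]
  unfold emb
  rw [Finset.sum_comm, Finset.mul_sum]
  refine Finset.sum_congr rfl fun σ _ => ?_
  by_cases hσ : ∀ e ∈ T, Sym2.map σ e ∈ G.edgeSet
  · have hsub : T.image (Sym2.map σ) ⊆ G.edgeFinset := by
      intro x hx
      obtain ⟨e, he, rfl⟩ := Finset.mem_image.1 hx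
      simpa using hσ e he
    have hc : (T.image (Sym2.map σ)).card = T.card :=
      Finset.card_image_of_injective _ (Sym2.map.injective σ.injective)
    have hf : G.edgeFinset.filter
        (fun e => ∀ t ∈ T, Sym2.map σ t ∈ (G.deleteEdges {e}).edgeSet)
        = G.edgeFinset \ T.image (Sym2.map σ) := by
      ext e
      simp only [Finset.mem_filter, Finset.mem_sdiff, Finset.mem_image,
        SimpleGraph.edgeSet_deleteEdges, Set.mem_sdiff, Set.mem_singleton_iff, not_exists, not_and]
      exact and_congr_right fun _ => ⟨fun h t ht => (h t ht).2, fun h t ht => ⟨hσ t ht, h t ht⟩⟩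
    have hs := congrArg (fun s : Finset (Sym2 (Fin n)) => (s.card : ℤ)) hf
    simp only [Finset.card_filter, Nat.cast_sum, Nat.cast_ite, Nat.cast_one, Nat.cast_zero] at hs
    rw [if_pos hσ, mul_one]
    refine Eq.trans (Finset.sum_congr rfl fun e _ => ?_) (hs.trans ?_)
    · congr
    rw [Finset.card_sdiff_of_subset hsub, Nat.cast_sub (Finset.card_le_card hsub), hc]
  · rw [if_neg hσ, mul_zero]
    refine Finset.sum_eq_zero fun e _ => if_neg fun h => hσ fun t ht => ?_
    have := h t ht
    rw [SimpleGraph.edgeSet_deleteEdges] at this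
    exact this.1

/-- Inclusion–exclusion: the alternating sum counts the permutations placing `H` disjointly from
`G`, and there are none when the two graphs together have more than `C(n,2)` edges. -/
lemma alternating_sum_emb {n : ℕ} (H G : SimpleGraph (Fin n))
    (hHG : n.choose 2 < H.edgeFinset.card + G.edgeFinset.card) :
    ∑ T ∈ H.edgeFinset.powerset, (-1 : ℤ) ^ T.card * emb T G = 0 := by
  unfold emb
  simp only [Finset.mul_sum]
  rw [Finset.sum_comm]
  refine Finset.sum_eq_zero fun σ _ => ?_
  have hf : H.edgeFinset.powerset.filter (fun T => ∀ e ∈ T, Sym2.map σ e ∈ G.edgeSet)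
      = (H.edgeFinset.filter fun e => Sym2.map σ e ∈ G.edgeSet).powerset := by
    ext T
    simp only [Finset.mem_filter, Finset.mem_powerset, Finset.subset_iff]
    exact ⟨fun h e he => ⟨h.1 he, h.2 e he⟩, fun h => ⟨fun e he => (h he).1, fun e he => (h he).2⟩⟩
  simp only [mul_ite, mul_one, mul_zero]
  rw [← Finset.sum_filter, hf, Finset.sum_powerset_neg_one_pow_card, if_neg]
  intro hempty
  have hdisj : Disjoint (H.edgeFinset.image (Sym2.map σ)) G.edgeFinset := by
    rw [Finset.disjoint_left]
    intro x hx hxG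
    obtain ⟨e, he, rfl⟩ := Finset.mem_image.1 hx
    have : e ∈ H.edgeFinset.filter fun e => Sym2.map σ e ∈ G.edgeSet :=
      Finset.mem_filter.2 ⟨he, by simpa using hxG⟩
    simp [hempty] at this
  have hsub : H.edgeFinset.image (Sym2.map σ) ∪ G.edgeFinset
      ⊆ (⊤ : SimpleGraph (Fin n)).edgeFinset := by
    refine Finset.union_subset ?_ (SimpleGraph.edgeFinset_mono le_top)
    intro x hx
    obtain ⟨e, he, rfl⟩ := Finset.mem_image.1 hx
    induction e using Sym2.ind with
    | _ a b =>
      have hab : H.Adj a b := by simpa using he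
      simpa using hab.ne
  have hle := Finset.card_le_card hsub
  rw [Finset.card_union_of_disjoint hdisj,
    Finset.card_image_of_injective _ (Sym2.map.injective σ.injective),
    SimpleGraph.card_edgeFinset_top_eq_card_choose_two, Fintype.card_fin] at hle
  omega

lemma emb_self_pos {n : ℕ} (H : SimpleGraph (Fin n)) : 0 < emb H.edgeFinset H := by
  unfold emb
  refine Finset.sum_pos' (fun σ _ => by split_ifs <;> simp) ⟨1, Finset.mem_univ _, ?_⟩
  rw [if_pos]
  · exact one_pos
  · intro e he
    simpa using he

/-- Between graphs with equally many edges an embedding is an isomorphism, so only the class of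
`H` contributes. -/
lemma emb_edgeFinset {n : ℕ} (H G : SimpleGraph (Fin n))
    (hc : H.edgeFinset.card = G.edgeFinset.card) :
    emb H.edgeFinset G = if isoClass H = isoClass G then emb H.edgeFinset H else 0 := by
  split_ifs with hiso
  · exact (emb_congr _ (Quotient.exact hiso)).symm
  · unfold emb
    refine Finset.sum_eq_zero fun σ _ => if_neg fun hσ => hiso (Quotient.sound ?_)
    have himg : H.edgeFinset.image (Sym2.map σ) = G.edgeFinset := by
      apply Finset.eq_of_subset_of_card_le
      · intro x hx
        obtain ⟨e, he, rfl⟩ := Finset.mem_image.1 hx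
        simpa using hσ e he
      · rw [Finset.card_image_of_injective _ (Sym2.map.injective σ.injective), hc]
    refine ⟨⟨σ, ?_⟩⟩
    intro a b
    rw [← SimpleGraph.mem_edgeSet, ← SimpleGraph.mem_edgeSet, ← SimpleGraph.mem_edgeFinset,
      ← himg, ← SimpleGraph.mem_edgeFinset, ← Sym2.map_mk]
    exact (Sym2.map.injective σ.injective).mem_finset_image

lemma sum_emb_edgeFinset {n m : ℕ} (P : Multiset (SimpleGraph (Fin n)))
    (hP : ∀ G ∈ P, G.edgeFinset.card = m) (H : SimpleGraph (Fin n)) (hH : H.edgeFinset.card = m) :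
    (P.map (emb H.edgeFinset)).sum
      = (P.map isoClass).count (isoClass H) * emb H.edgeFinset H := by
  rw [Multiset.map_congr rfl fun G hG => emb_edgeFinset H G (hH.trans (hP G hG).symm)]
  clear hP
  induction P using Multiset.induction with
  | empty => simp
  | cons G P ih =>
    rw [Multiset.map_cons, Multiset.sum_cons, ih, Multiset.map_cons, Multiset.count_cons]
    split_ifs <;> push_cast <;> ring

/-- The edge deck of a collection of `m`-edge graphs determines the total number of embeddings of
every set of fewer than `m` pairs. -/
lemma sum_emb_eq_of_card_lt {n m : ℕ} (P Q : Multiset (SimpleGraph (Fin n)))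
    (hP : ∀ G ∈ P, G.edgeFinset.card = m) (hQ : ∀ G ∈ Q, G.edgeFinset.card = m)
    (h : (P.bind (ED 1)).map isoClass = (Q.bind (ED 1)).map isoClass)
    (T : Finset (Sym2 (Fin n))) (hT : T.card < m) :
    (P.map (emb T)).sum = (Q.map (emb T)).sum := by
  have key : ∀ R : Multiset (SimpleGraph (Fin n)), (∀ G ∈ R, G.edgeFinset.card = m) →
      ((R.bind (ED 1)).map (emb T)).sum = ((m : ℤ) - T.card) * (R.map (emb T)).sum := by
    intro R hR
    rw [Multiset.map_bind, Multiset.sum_bind, ← Multiset.sum_map_mul_left]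
    refine congrArg _ (Multiset.map_congr rfl fun G hG => ?_)
    rw [sum_emb_ED, hR G hG]
  have hdeck : ((P.bind (ED 1)).map (emb T)) = ((Q.bind (ED 1)).map (emb T)) := by
    have := congrArg (Multiset.map (Quotient.lift (s := isoSetoid n) (emb T)
      fun _ _ hab => emb_congr T hab)) h
    simpa only [Multiset.map_map, Function.comp_def, isoClass, Quotient.lift_mk] using this
  have hmul := (key P hP).symm.trans ((congrArg Multiset.sum hdeck).trans (key Q hQ))
  exact mul_left_cancel₀ (by omega) hmul

lemma sum_emb_edgeFinset_eq {n m : ℕ} (hm : 2 * m > n.choose 2)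
    (P Q : Multiset (SimpleGraph (Fin n)))
    (hP : ∀ G ∈ P, G.edgeFinset.card = m) (hQ : ∀ G ∈ Q, G.edgeFinset.card = m)
    (h : (P.bind (ED 1)).map isoClass = (Q.bind (ED 1)).map isoClass)
    (H : SimpleGraph (Fin n)) (hH : H.edgeFinset.card = m) :
    (P.map (emb H.edgeFinset)).sum = (Q.map (emb H.edgeFinset)).sum := by
  have key : ∀ R : Multiset (SimpleGraph (Fin n)), (∀ G ∈ R, G.edgeFinset.card = m) →
      ∑ T ∈ H.edgeFinset.powerset, (-1 : ℤ) ^ T.card * (R.map (emb T)).sum = 0 := by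
    intro R
    induction R using Multiset.induction with
    | empty => simp
    | cons G R ih =>
      intro hR
      simp only [Multiset.map_cons, Multiset.sum_cons, mul_add, Finset.sum_add_distrib]
      rw [ih fun K hK => hR K (Multiset.mem_cons_of_mem hK), add_zero]
      refine alternating_sum_emb H G ?_
      rw [hH, hR G (Multiset.mem_cons_self _ _)]
      omega
  have hdiff : ∑ T ∈ H.edgeFinset.powerset,
      (-1 : ℤ) ^ T.card * ((P.map (emb T)).sum - (Q.map (emb T)).sum) = 0 := by
    simp only [mul_sub, Finset.sum_sub_distrib, key P hP, key Q hQ, sub_zero]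
  -- All proper subsets of `E(H)` have fewer than `m` elements, so only `T = E(H)` contributes.
  rw [Finset.sum_eq_single_of_mem H.edgeFinset (Finset.mem_powerset_self _)] at hdiff
  · have := (mul_eq_zero.1 hdiff).resolve_left (pow_ne_zero _ (by norm_num))
    exact sub_eq_zero.1 this
  · intro T hT hne
    have hlt : T.card < m :=
      hH ▸ Finset.card_lt_card ((Finset.mem_powerset.1 hT).ssubset_of_ne hne)
    rw [sum_emb_eq_of_card_lt P Q hP hQ h T hlt, sub_self, mul_zero]

/-- Lovász's result for collections, edge-deck form: if `2m > C(n,2)` and the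
`1`-edge decks of two collections of `m`-edge graphs agree up to isomorphism,
then the collections are equal up to isomorphism. -/
theorem lovasz_collections_edge_deck (n m : ℕ) (hm : 2 * m > n.choose 2)
    (P Q : Multiset (SimpleGraph (Fin n)))
    (hP : ∀ G ∈ P, G.edgeFinset.card = m) (hQ : ∀ G ∈ Q, G.edgeFinset.card = m)
    (h : (P.bind (ED 1)).map isoClass = (Q.bind (ED 1)).map isoClass) :
    P.map isoClass = Q.map isoClass := by
  have count_eq : ∀ H : SimpleGraph (Fin n), H.edgeFinset.card = m →
      (P.map isoClass).count (isoClass H) = (Q.map isoClass).count (isoClass H) := by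
    intro H hH
    have hsum := sum_emb_edgeFinset_eq hm P Q hP hQ h H hH
    rw [sum_emb_edgeFinset P hP H hH, sum_emb_edgeFinset Q hQ H hH] at hsum
    exact_mod_cast mul_right_cancel₀ (emb_self_pos H).ne' hsum
  ext c
  by_cases hc : c ∈ P.map isoClass ∨ c ∈ Q.map isoClass
  · rcases hc with hc | hc <;> obtain ⟨H, hH, rfl⟩ := Multiset.mem_map.1 hc
    · exact count_eq H (hP H hH)
    · exact count_eq H (hQ H hH)
  · rw [not_or] at hc
    rw [Multiset.count_eq_zero_of_notMem hc.1, Multiset.count_eq_zero_of_notMem hc.2]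

end
end

section
/- (Lovász's result for collections, modified-deck form.) Let N = C(n,2) and suppose 2m > N. Let P and Q be multisets of simple graphs on Fin n in which every member has exactly m edges. If the modified 1-decks of P and Q agree up to isomorphism (i.e. the multiset unions of MD_1 over the members of P and of Q have equal images under the quotient map to isomorphism classes), then P and Q are equal up to isomorphism (the multisets of isomorphism classes of the members of P and of Q coincide). -/
/-! Write `E` for the set of possible edges, `N = |E|`, and identify graphs with subsets of `E`.
Summing a function over the modified `1`-deck is the operator `T` on functions of `m`-subsets that
removes one element and then adds one. Comparing with the operator `B` that adds one element and
then removes one gives `T = B + (2m - N) • id`, because the proper swaps contribute equally to both.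
`B` has the form `DᵀD`, hence is positive semidefinite, so `T` is injective when `2m > N`
(`eq_zero_of_swap_sum_eq_zero`).

`T` commutes with vertex permutations, so it acts on functions of isomorphism classes; by finite
dimension it is surjective there. Hence the indicator function of any class `c` is `T φ` for some
class function `φ` (on graphs with `m` edges), and the number of members of `P` in the class `c` is
the sum of `φ` over the modified deck of `P`, which is determined by the deck up to isomorphism. -/

open Finset

noncomputable section
open scoped Classical

/-! ### A positive definite operator on `m`-subsets -/

/-- Replacing one element of an `m`-subset `s` of `U` by another element of `U` (possibly itself)
defines an operator on functions on `m`-subsets. For `2m > |U|` it is injective: it equals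
`(2m - |U|) • id` plus the positive semidefinite operator "add an element, then remove one". -/
lemma eq_zero_of_swap_sum_eq_zero {β : Type*} [DecidableEq β] (U : Finset β) (m : ℕ)
    (hm : 2 * m > U.card) (f : Finset β → ℝ)
    (h : ∀ s ∈ U.powersetCard m,
      ∑ e ∈ s, ∑ e' ∈ U \ s.erase e, f (insert e' (s.erase e)) = 0) :
    ∀ s ∈ U.powersetCard m, f s = 0 := by
  set g : Finset β → ℝ := fun t => ∑ e ∈ t, f (t.erase e) with hg
  have hlocal : ∀ s ∈ U.powersetCard m,
      (2 * m - U.card : ℝ) * f s + ∑ e' ∈ U \ s, g (insert e' s) = 0 := by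
    intro s hs
    rw [← h s hs]
    obtain ⟨hsU, hcard⟩ := mem_powersetCard.1 hs
    -- Both two-step sums consist of a multiple of `f s` and the same sum over proper swaps.
    have h1 : ∑ e ∈ s, ∑ e' ∈ U \ s.erase e, f (insert e' (s.erase e))
        = m * f s + ∑ e ∈ s, ∑ e' ∈ U \ s, f (insert e' (s.erase e)) := by
      rw [← hcard, ← nsmul_eq_mul, ← sum_const, ← sum_add_distrib]
      refine sum_congr rfl fun e he => ?_
      have : U \ s.erase e = insert e (U \ s) := by
        ext x
        have := hsU he
        by_cases hx : x = e <;> simp_all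
      rw [this, sum_insert (by simp [he]), insert_erase he]
    have h2 : ∑ e' ∈ U \ s, g (insert e' s)
        = (U.card - m : ℝ) * f s + ∑ e ∈ s, ∑ e' ∈ U \ s, f (insert e' (s.erase e)) := by
      have hc : (U.card - m : ℝ) = ((U \ s).card : ℕ) := by
        rw [card_sdiff_of_subset hsU, hcard, Nat.cast_sub (hcard ▸ card_le_card hsU)]
      rw [hc, sum_comm, ← nsmul_eq_mul, ← sum_const, ← sum_add_distrib]
      refine sum_congr rfl fun e' he' => ?_
      have hn : e' ∉ s := (mem_sdiff.1 he').2
      simp only [hg]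
      rw [sum_insert hn, erase_insert hn]
      congr 1
      refine sum_congr rfl fun e he => ?_
      rw [erase_insert_of_ne]
      rintro rfl
      exact hn he
    rw [h1, h2]
    ring
  have hpair : ∑ s ∈ U.powersetCard m, f s * ∑ e' ∈ U \ s, g (insert e' s)
      = ∑ t ∈ U.powersetCard (m + 1), g t * g t := by
    have hr : ∀ t, g t * g t = ∑ e ∈ t, f (t.erase e) * g t := fun t => by
      rw [← sum_mul]
    simp only [hr, mul_sum]
    rw [sum_sigma', sum_sigma']
    refine sum_bij' (fun p _ => ⟨insert p.2 p.1, p.2⟩) (fun p _ => ⟨p.1.erase p.2, p.2⟩)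
      ?_ ?_ ?_ ?_ ?_
    · rintro ⟨s, e⟩ hp
      simp only [mem_sigma, mem_powersetCard, mem_sdiff] at hp ⊢
      exact ⟨⟨insert_subset hp.2.1 hp.1.1, by rw [card_insert_of_notMem hp.2.2, hp.1.2]⟩,
        mem_insert_self _ _⟩
    · rintro ⟨t, e⟩ hp
      simp only [mem_sigma, mem_powersetCard, mem_sdiff] at hp ⊢
      exact ⟨⟨(erase_subset _ _).trans hp.1.1, by rw [card_erase_of_mem hp.2, hp.1.2]; rfl⟩,
        hp.1.1 hp.2, notMem_erase _ _⟩
    · rintro ⟨s, e⟩ hp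
      simp only [mem_sigma, mem_sdiff] at hp
      simp [erase_insert hp.2.2]
    · rintro ⟨t, e⟩ hp
      simp only [mem_sigma] at hp
      simp [insert_erase hp.2]
    · rintro ⟨s, e⟩ hp
      simp only [mem_sigma, mem_sdiff] at hp
      simp [erase_insert hp.2.2]
  have hpos : (0 : ℝ) < 2 * m - U.card := by
    have : (U.card : ℝ) < 2 * m := by exact_mod_cast hm
    linarith
  have htot : (2 * m - U.card : ℝ) * ∑ s ∈ U.powersetCard m, f s * f s
      + ∑ t ∈ U.powersetCard (m + 1), g t * g t = 0 := by
    rw [← hpair, mul_sum, ← sum_add_distrib]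
    refine sum_eq_zero fun s hs => ?_
    linear_combination f s * hlocal s hs
  have hB : 0 ≤ ∑ t ∈ U.powersetCard (m + 1), g t * g t :=
    sum_nonneg fun t _ => mul_self_nonneg _
  have hA : 0 ≤ ∑ s ∈ U.powersetCard m, f s * f s :=
    sum_nonneg fun t _ => mul_self_nonneg _
  have hA0 : ∑ s ∈ U.powersetCard m, f s * f s = 0 := by nlinarith
  intro s hs
  exact mul_self_eq_zero.1 ((sum_eq_zero_iff_of_nonneg fun t _ => mul_self_nonneg _).1 hA0 s hs)

/-! ### The modified deck as an operator on functions of isomorphism classes -/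

/-- The edge set of the complete graph on `Fin n`: all possible edges. -/
def allEdges (n : ℕ) : Finset (Sym2 (Fin n)) := (⊤ : SimpleGraph (Fin n)).edgeFinset

/-- The isomorphism class of the graph with the given edges (diagonal elements are ignored). -/
def edgeClass {n : ℕ} (s : Finset (Sym2 (Fin n))) : Quotient (isoSetoid n) :=
  isoClass (SimpleGraph.fromEdgeSet (s : Set (Sym2 (Fin n))))

/-- The sum of `φ` over the isomorphism classes of the modified `1`-deck of the graph with
edge set `s`. -/
def deckSum {n : ℕ} (φ : Quotient (isoSetoid n) → ℝ) (s : Finset (Sym2 (Fin n))) : ℝ :=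
  ∑ e ∈ s, ∑ e' ∈ allEdges n \ s.erase e, φ (edgeClass (insert e' (s.erase e)))

lemma edgeFinset_subset_allEdges {n : ℕ} (G : SimpleGraph (Fin n)) :
    G.edgeFinset ⊆ allEdges n :=
  SimpleGraph.edgeFinset_mono le_top

lemma edgeClass_edgeFinset {n : ℕ} (G : SimpleGraph (Fin n)) :
    edgeClass G.edgeFinset = isoClass G := by
  simp [edgeClass]

lemma exists_edgeFinset_eq {n : ℕ} {s : Finset (Sym2 (Fin n))} (hs : s ⊆ allEdges n) :
    ∃ G : SimpleGraph (Fin n), G.edgeFinset = s := by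
  refine ⟨SimpleGraph.fromEdgeSet (s : Set (Sym2 (Fin n))), ?_⟩
  ext e
  simp only [SimpleGraph.mem_edgeFinset, SimpleGraph.edgeSet_fromEdgeSet]
  constructor
  · exact fun h => h.1
  · intro h
    have := hs h
    simp [allEdges] at this
    exact ⟨h, by simpa using this⟩

lemma sum_MD_one {n : ℕ} (φ : Quotient (isoSetoid n) → ℝ) (G : SimpleGraph (Fin n)) :
    ((MD 1 G).map fun H => φ (isoClass H)).sum = deckSum φ G.edgeFinset := by
  have hc : ∀ e, ((G.deleteEdges {e})ᶜ).edgeFinset = allEdges n \ G.edgeFinset.erase e := by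
    intro e
    ext x
    induction x with | _ a b => 
    simp only [allEdges, SimpleGraph.mem_edgeFinset, SimpleGraph.mem_edgeSet, mem_sdiff,
      SimpleGraph.compl_adj, SimpleGraph.top_adj, SimpleGraph.deleteEdges_adj, mem_erase,
      Set.mem_singleton_iff]
    tauto
  simp only [MD, powersetCard_one, Multiset.map_bind, Multiset.sum_bind, deckSum,
    Finset.map_val, Multiset.map_map, Function.comp_def]
  refine sum_congr rfl fun e he => ?_
  have hs : (G.deleteEdges (({e} : Finset (Sym2 (Fin n))) : Set (Sym2 (Fin n))))ᶜ.edgeFinset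
      = allEdges n \ G.edgeFinset.erase e := by
    rw [← hc e]
    simp
  rw [← hs]
  refine sum_congr rfl fun e' _ => ?_
  have hi : insert e' (G.edgeFinset.erase e) = G.edgeFinset \ {e} ∪ {e'} := by
    rw [union_comm, ← insert_eq, sdiff_singleton_eq_erase]
  rw [edgeClass, hi]
  rfl

/-- The edge bijection induced by a vertex permutation. -/
def edgePerm {n : ℕ} (σ : Equiv.Perm (Fin n)) : Sym2 (Fin n) ↪ Sym2 (Fin n) :=
  σ.toEmbedding.sym2Map

lemma edgeClass_map {n : ℕ} (σ : Equiv.Perm (Fin n)) (s : Finset (Sym2 (Fin n))) :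
    edgeClass (s.map (edgePerm σ)) = edgeClass s := by
  refine Quotient.sound (s := isoSetoid n) ⟨SimpleGraph.Iso.symm ⟨σ, ?_⟩⟩
  intro a b
  have : s(σ a, σ b) = edgePerm σ s(a, b) := rfl
  simp only [SimpleGraph.fromEdgeSet_adj, this, mem_coe, mem_map', ne_eq, σ.injective.eq_iff]

lemma allEdges_map {n : ℕ} (σ : Equiv.Perm (Fin n)) :
    (allEdges n).map (edgePerm σ) = allEdges n := by
  refine eq_of_subset_of_card_le ?_ (by rw [card_map])
  intro x hx
  obtain ⟨y, hy, rfl⟩ := mem_map.1 hx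
  induction y with | _ a b =>
  have : edgePerm σ s(a, b) = s(σ a, σ b) := rfl
  simpa [this, allEdges] using hy

lemma deckSum_map {n : ℕ} (φ : Quotient (isoSetoid n) → ℝ) (σ : Equiv.Perm (Fin n))
    (s : Finset (Sym2 (Fin n))) :
    deckSum φ (s.map (edgePerm σ)) = deckSum φ s := by
  simp only [deckSum]
  rw [sum_map]
  refine sum_congr rfl fun e _ => ?_
  rw [← map_erase]
  conv_lhs => rw [← allEdges_map σ]
  rw [← Finset.map_sdiff, sum_map]
  refine sum_congr rfl fun e' _ => ?_
  rw [← map_insert, edgeClass_map]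

lemma exists_edgeFinset_map {n : ℕ} {G H : SimpleGraph (Fin n)} (h : isoClass G = isoClass H) :
    ∃ σ : Equiv.Perm (Fin n), G.edgeFinset.map (edgePerm σ) = H.edgeFinset := by
  obtain ⟨i⟩ : Nonempty (G ≃g H) := Quotient.exact (s := isoSetoid n) h
  refine ⟨i.toEquiv, ?_⟩
  ext x
  induction x with | _ a b =>
  obtain ⟨a, rfl⟩ := i.surjective a
  obtain ⟨b, rfl⟩ := i.surjective b
  have h2 : s(i a, i b) = edgePerm i.toEquiv s(a, b) := rfl
  rw [h2, mem_map', ← h2]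
  simp only [SimpleGraph.mem_edgeFinset, SimpleGraph.mem_edgeSet]
  exact i.map_adj_iff.symm

lemma isoClass_out {n : ℕ} (c : Quotient (isoSetoid n)) : isoClass c.out = c :=
  Quotient.out_eq c

/-- `deckSum` on the classes with `m` edges, extended by the identity on the other classes so as
to be an endomorphism of the space of all functions of isomorphism classes. -/
def deckOp (n m : ℕ) : (Quotient (isoSetoid n) → ℝ) →ₗ[ℝ] (Quotient (isoSetoid n) → ℝ) where
  toFun φ c := if c.out.edgeFinset.card = m then deckSum φ c.out.edgeFinset else φ c
  map_add' φ ψ := by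
    ext c
    simp only [deckSum, Pi.add_apply, sum_add_distrib]
    split_ifs <;> rfl
  map_smul' a φ := by
    ext c
    simp only [deckSum, Pi.smul_apply, ← smul_sum, RingHom.id_apply]
    split_ifs <;> rfl

lemma deckOp_isoClass {n m : ℕ} (φ : Quotient (isoSetoid n) → ℝ) (G : SimpleGraph (Fin n))
    (hG : G.edgeFinset.card = m) : deckOp n m φ (isoClass G) = deckSum φ G.edgeFinset := by
  obtain ⟨σ, hσ⟩ := exists_edgeFinset_map (isoClass_out (isoClass G)).symm
  change (if _ then _ else _) = _
  rw [← hσ, card_map, if_pos hG, deckSum_map]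

lemma deckOp_injective {n m : ℕ} (hm : 2 * m > n.choose 2) :
    Function.Injective (deckOp n m) := by
  rw [← LinearMap.ker_eq_bot, LinearMap.ker_eq_bot']
  intro φ hφ
  have hU : (allEdges n).card = n.choose 2 := by
    simpa [allEdges] using SimpleGraph.card_edgeFinset_top_eq_card_choose_two (V := Fin n)
  have key := eq_zero_of_swap_sum_eq_zero (allEdges n) m (hU ▸ hm) (fun s => φ (edgeClass s)) (by
    intro s hs
    obtain ⟨hsU, hcard⟩ := mem_powersetCard.1 hs
    obtain ⟨G, rfl⟩ := exists_edgeFinset_eq hsU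
    have h2 := deckOp_isoClass φ G hcard
    rw [hφ] at h2
    exact h2.symm)
  ext c
  by_cases hc : c.out.edgeFinset.card = m
  · have := key _ (mem_powersetCard.2 ⟨edgeFinset_subset_allEdges c.out, hc⟩)
    rwa [edgeClass_edgeFinset, isoClass_out] at this
  · have := congrFun hφ c
    change (if _ then _ else _) = _ at this
    rwa [if_neg hc] at this

lemma count_map_isoClass {n : ℕ} (R : Multiset (SimpleGraph (Fin n)))
    (c : Quotient (isoSetoid n)) :
    ((R.map isoClass).count c : ℝ)
      = (R.map fun G => (Pi.single c 1 : Quotient (isoSetoid n) → ℝ) (isoClass G)).sum := by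
  induction R using Multiset.induction_on with
  | empty => simp
  | cons G R ih =>
    simp only [Multiset.map_cons, Multiset.count_cons, Multiset.sum_cons, Nat.cast_add, ih]
    rw [add_comm]
    congr 1
    simp [Pi.single_apply, eq_comm]

/-- Lovász's result for collections, modified-deck form: if `2m > C(n,2)` and the
modified `1`-decks of two collections of `m`-edge graphs agree up to isomorphism,
then the collections are equal up to isomorphism. -/
theorem lovasz_collections_modified_deck (n m : ℕ) (hm : 2 * m > n.choose 2)
    (P Q : Multiset (SimpleGraph (Fin n)))
    (hP : ∀ G ∈ P, G.edgeFinset.card = m) (hQ : ∀ G ∈ Q, G.edgeFinset.card = m)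
    (h : (P.bind (MD 1)).map isoClass = (Q.bind (MD 1)).map isoClass) :
    P.map isoClass = Q.map isoClass := by
  have hsurj := LinearMap.injective_iff_surjective.1 (deckOp_injective hm)
  refine Multiset.ext.2 fun c => ?_
  obtain ⟨φ, hφ⟩ := hsurj (Pi.single c 1)
  have main : ∀ R : Multiset (SimpleGraph (Fin n)), (∀ G ∈ R, G.edgeFinset.card = m) →
      ((R.map isoClass).count c : ℝ) = (((R.bind (MD 1)).map isoClass).map φ).sum := by
    intro R hR
    rw [count_map_isoClass, Multiset.map_map, Multiset.map_bind, Multiset.sum_bind]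
    refine congrArg _ (Multiset.map_congr rfl fun G hG => ?_)
    rw [← hφ, deckOp_isoClass φ G (hR G hG), ← sum_MD_one]
    rfl
  have := (main P hP).trans ((congrArg (fun M => (M.map φ).sum) h).trans (main Q hQ).symm)
  exact_mod_cast this

end
end

section
/- Let G and H be simple graphs on Fin n, each with exactly m edges. If the modified 1-decks MD_1(G) and MD_1(H) agree up to isomorphism, then the 1-edge decks ED_1(G) and ED_1(H) agree up to isomorphism. (The 1-edge deck of a graph can be constructed from its modified 1-deck.) -/
/-!
Let `D` delete one edge in all possible ways and `U` add one edge in all possible ways, as linear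
operators on formal sums of labelled graphs. The modified `1`-deck of `G` is `U D G`
(`MD_one_eq`), and `U` is the transpose of `D`. Replace the formal difference `G - H` by its
symmetrisation `x` over all relabellings, so that equality up to isomorphism becomes genuine equality.
Equality of the modified decks gives `⟨U D x, x⟩ = 0`, i.e. `⟨D x, D x⟩ = 0`, hence `D x = 0`
because the inner product is positive definite. Finally `D x` is the symmetrised difference of the
edge decks; pairing it with indicators of isomorphism classes (`sum_symDeck_mul`) recovers the
multiplicities in the edge decks.
-/

open Finset

noncomputable section
open scoped Classical

/-- `OneEdgeLess K A`: the graph `K` arises from `A` by deleting exactly one edge. -/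
def OneEdgeLess {n : ℕ} (K A : SimpleGraph (Fin n)) : Prop :=
  ∃ e ∈ A.edgeSet, K = A.deleteEdges {e}

/-- The same relation read upwards: `A` arises from `K` by adding one non-edge. -/
lemma oneEdgeLess_iff_add {n : ℕ} (K A : SimpleGraph (Fin n)) :
    OneEdgeLess K A ↔
      ∃ e ∈ Kᶜ.edgeSet, A = SimpleGraph.fromEdgeSet (K.edgeSet ∪ {e}) := by
  constructor
  · rintro ⟨e, he, rfl⟩
    refine ⟨e, ?_, ?_⟩
    · induction e with
      | _ a b =>
        simp only [SimpleGraph.mem_edgeSet] at he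
        simp [SimpleGraph.compl_adj, SimpleGraph.deleteEdges_adj, he.ne]
    · rw [← SimpleGraph.edgeSet_inj, SimpleGraph.edgeSet_fromEdgeSet,
        SimpleGraph.edgeSet_deleteEdges]
      ext x
      have hx : x ∈ A.edgeSet → ¬ x.IsDiag := A.not_isDiag_of_mem_edgeSet
      by_cases hxe : x = e
      · subst hxe; simp [he, hx he]
      · simp only [Set.mem_sdiff, Set.mem_union, Set.mem_singleton_iff, hxe, Sym2.mem_diagSet]
        tauto
  · rintro ⟨e, he, rfl⟩
    have hd : ¬ e.IsDiag := Kᶜ.not_isDiag_of_mem_edgeSet he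
    have hK : e ∉ K.edgeSet := by
      induction e with
      | _ a b =>
        simp only [SimpleGraph.mem_edgeSet, SimpleGraph.compl_adj] at he ⊢
        exact he.2
    refine ⟨e, by simp [hd], ?_⟩
    rw [← SimpleGraph.edgeSet_inj, SimpleGraph.edgeSet_deleteEdges,
      SimpleGraph.edgeSet_fromEdgeSet]
    ext x
    have hx : x ∈ K.edgeSet → ¬ x.IsDiag := K.not_isDiag_of_mem_edgeSet
    by_cases hxe : x = e
    · subst hxe; simp [hK]
    · simp only [Set.mem_sdiff, Set.mem_union, Set.mem_singleton_iff, hxe, Sym2.mem_diagSet]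
      tauto

lemma OneEdgeLess.simpleGraph {n : ℕ} (σ : Equiv.Perm (Fin n)) {K A : SimpleGraph (Fin n)}
    (h : OneEdgeLess K A) : OneEdgeLess (σ.simpleGraph K) (σ.simpleGraph A) := by
  obtain ⟨e, he, rfl⟩ := h
  induction e with
  | _ a b =>
    refine ⟨s(σ a, σ b), by simpa [Equiv.simpleGraph] using he, ?_⟩
    ext x y
    simp [Equiv.simpleGraph, SimpleGraph.deleteEdges_adj, Equiv.symm_apply_eq]

lemma oneEdgeLess_simpleGraph_iff {n : ℕ} (σ : Equiv.Perm (Fin n)) (K A : SimpleGraph (Fin n)) :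
    OneEdgeLess (σ.simpleGraph K) (σ.simpleGraph A) ↔ OneEdgeLess K A := by
  refine ⟨fun h => ?_, fun h => h.simpleGraph σ⟩
  have hs := h.simpleGraph σ.symm
  rw [← Equiv.symm_simpleGraph, Equiv.symm_apply_apply, Equiv.symm_apply_apply] at hs
  exact hs

/-- In `ED` the coercion to sets is applied to the whole multiset of edge sets, through a monadic
bind; here it is moved inside the mapped function. -/
lemma ED_eq_map {n : ℕ} (i : ℕ) (A : SimpleGraph (Fin n)) :
    ED i A = (A.edgeFinset.powersetCard i).val.map fun X : Finset (Sym2 (Fin n)) =>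
      A.deleteEdges (X : Set (Sym2 (Fin n))) := by
  unfold ED
  simp only [Multiset.bind_def, Multiset.pure_def, Multiset.bind_singleton, Multiset.map_map,
    Function.comp_def]

/-- Distinct edges give distinct labelled cards, so the labelled `1`-edge deck is a set. -/
lemma ED_one_eq {n : ℕ} (A : SimpleGraph (Fin n)) :
    ED 1 A = (univ.filter fun K => OneEdgeLess K A).val := by
  rw [ED_eq_map, Multiset.Nodup.ext _ (Finset.nodup _)]
  · intro K
    simp only [Finset.powersetCard_one, Multiset.mem_map, Finset.mem_val, Finset.mem_map,
      Finset.mem_filter, Finset.mem_univ, true_and, SimpleGraph.mem_edgeFinset]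
    constructor
    · rintro ⟨_, ⟨e, he, rfl⟩, rfl⟩
      exact ⟨e, he, by simp⟩
    · rintro ⟨e, he, rfl⟩
      exact ⟨_, ⟨e, he, rfl⟩, by simp⟩
  · refine Multiset.Nodup.map_on ?_ (Finset.nodup _)
    intro X hX Y hY hXY
    simp only [Finset.mem_val, Finset.mem_powersetCard] at hX hY
    have h1 := congrArg SimpleGraph.edgeSet hXY
    simp only [SimpleGraph.edgeSet_deleteEdges] at h1
    have hXA : (X : Set (Sym2 (Fin n))) ⊆ A.edgeSet := by
      intro x hx; exact SimpleGraph.mem_edgeFinset.1 (hX.1 hx)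
    have hYA : (Y : Set (Sym2 (Fin n))) ⊆ A.edgeSet := by
      intro x hx; exact SimpleGraph.mem_edgeFinset.1 (hY.1 hx)
    rw [← Finset.coe_inj, ← Set.sdiff_sdiff_cancel_left hXA, h1, Set.sdiff_sdiff_cancel_left hYA]

/-- Adding distinct non-edges to `K` gives distinct labelled graphs, namely those
from which `K` arises by deleting one edge. -/
lemma add_one_eq {n : ℕ} (K : SimpleGraph (Fin n)) :
    ((Kᶜ.edgeFinset.powersetCard 1).val.map fun Y =>
      SimpleGraph.fromEdgeSet ((K.edgeFinset ∪ Y : Finset (Sym2 (Fin n))) : Set (Sym2 (Fin n)))) =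
      (univ.filter fun A => OneEdgeLess K A).val := by
  rw [Multiset.Nodup.ext _ (Finset.nodup _)]
  · intro A
    simp only [Finset.powersetCard_one, Multiset.mem_map, Finset.mem_val, Finset.mem_map,
      Finset.mem_filter, Finset.mem_univ, true_and, oneEdgeLess_iff_add,
      SimpleGraph.mem_edgeFinset]
    constructor
    · rintro ⟨_, ⟨e, he, rfl⟩, rfl⟩
      exact ⟨e, he, by simp⟩
    · rintro ⟨e, he, rfl⟩
      exact ⟨_, ⟨e, he, rfl⟩, by simp⟩
  · refine Multiset.Nodup.map_on ?_ (Finset.nodup _)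
    intro X hX Y hY hXY
    simp only [Finset.mem_val, Finset.mem_powersetCard] at hX hY
    have h1 := congrArg SimpleGraph.edgeSet hXY
    simp only [SimpleGraph.edgeSet_fromEdgeSet] at h1
    have key : ∀ Z : Finset (Sym2 (Fin n)), Z ⊆ Kᶜ.edgeFinset →
        (Z : Set (Sym2 (Fin n))) =
          (((K.edgeFinset ∪ Z : Finset _) : Set (Sym2 (Fin n))) \ Sym2.diagSet) \ K.edgeSet := by
      intro Z hZ
      ext x
      have hx : x ∈ Z → ¬ x.IsDiag ∧ x ∉ K.edgeSet := by
        intro hxZ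
        have := SimpleGraph.mem_edgeFinset.1 (hZ hxZ)
        refine ⟨Kᶜ.not_isDiag_of_mem_edgeSet this, ?_⟩
        induction x with
        | _ a b =>
          simp only [SimpleGraph.mem_edgeSet, SimpleGraph.compl_adj] at this ⊢
          exact this.2
      simp only [Finset.coe_union, SimpleGraph.coe_edgeFinset, Set.mem_sdiff, Set.mem_union,
        Finset.mem_coe, Sym2.mem_diagSet]
      tauto
    rw [← Finset.coe_inj, key X hX.1, h1, ← key Y hY.1]

/-- The modified deck goes one edge down, then one edge up. -/
lemma MD_one_eq {n : ℕ} (A : SimpleGraph (Fin n)) :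
    MD 1 A = (ED 1 A).bind fun K => (univ.filter fun B => OneEdgeLess K B).val := by
  rw [ED_eq_map, Multiset.bind_map]
  unfold MD
  refine Multiset.bind_congr fun X _ => ?_
  rw [← add_one_eq]
  have hX : A.edgeFinset \ X =
      (A.deleteEdges (X : Set (Sym2 (Fin n)))).edgeFinset := by
    ext x; simp
  rw [hX]
  -- the two sides differ only in instances on the edge sets
  congr!

lemma isoClass_eq_iff {n : ℕ} {A B : SimpleGraph (Fin n)} :
    isoClass A = isoClass B ↔ ∃ σ : Equiv.Perm (Fin n), σ.simpleGraph A = B := by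
  refine Iff.trans Quotient.eq ?_
  constructor
  · rintro ⟨f⟩
    refine ⟨f.toEquiv, ?_⟩
    ext x y
    change A.Adj (f.symm x) (f.symm y) ↔ B.Adj x y
    rw [← f.map_adj_iff]
    simp
  · rintro ⟨σ, rfl⟩
    refine ⟨⟨σ, ?_⟩⟩
    intro a b
    simp [Equiv.simpleGraph]

/-- An isomorphism-invariant statistic, summed over a multiset of graphs, depends only on the
isomorphism classes of its members. -/
lemma sum_map_eq_of_map_isoClass_eq {n : ℕ} {P Q : Multiset (SimpleGraph (Fin n))}
    (h : P.map isoClass = Q.map isoClass) (x : SimpleGraph (Fin n) → ℤ)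
    (hx : ∀ (σ : Equiv.Perm (Fin n)) A, x (σ.simpleGraph A) = x A) :
    (P.map x).sum = (Q.map x).sum := by
  let xq : Quotient (isoSetoid n) → ℤ := Quotient.lift x (fun A B hAB => by
    obtain ⟨σ, rfl⟩ := isoClass_eq_iff.1 (Quotient.sound hAB)
    exact (hx σ A).symm)
  have key : ∀ R : Multiset (SimpleGraph (Fin n)), R.map x = (R.map isoClass).map xq := by
    intro R
    rw [Multiset.map_map]
    rfl
  rw [key, key, h]

/-- The number of relabellings of `G` equal to `B`. -/
def relabelCount {n : ℕ} (G B : SimpleGraph (Fin n)) : ℤ :=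
  ∑ σ : Equiv.Perm (Fin n), if σ.simpleGraph G = B then 1 else 0

lemma relabelCount_simpleGraph {n : ℕ} (G B : SimpleGraph (Fin n)) (τ : Equiv.Perm (Fin n)) :
    relabelCount G (τ.simpleGraph B) = relabelCount G B := by
  unfold relabelCount
  rw [← Equiv.sum_comp (Equiv.mulLeft τ)]
  refine Finset.sum_congr rfl fun σ _ => ?_
  have h : (Equiv.mulLeft τ σ).simpleGraph G = τ.simpleGraph (σ.simpleGraph G) := rfl
  rw [h]
  simp only [EmbeddingLike.apply_eq_iff_eq]

/-- The symmetrised `1`-edge deck of `G`: the number of relabellings of `G` that have `K` as a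
labelled card. -/
def symDeck {n : ℕ} (G K : SimpleGraph (Fin n)) : ℤ :=
  ∑ σ : Equiv.Perm (Fin n), if OneEdgeLess K (σ.simpleGraph G) then 1 else 0

lemma symDeck_simpleGraph {n : ℕ} (G K : SimpleGraph (Fin n)) (τ : Equiv.Perm (Fin n)) :
    symDeck G (τ.simpleGraph K) = symDeck G K := by
  unfold symDeck
  rw [← Equiv.sum_comp (Equiv.mulLeft τ)]
  refine Finset.sum_congr rfl fun σ _ => ?_
  have h : (Equiv.mulLeft τ σ).simpleGraph G = τ.simpleGraph (σ.simpleGraph G) := rfl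
  rw [h]
  simp only [oneEdgeLess_simpleGraph_iff]

lemma symDeck_eq_sum_relabelCount {n : ℕ} (G K : SimpleGraph (Fin n)) :
    symDeck G K = ∑ B with OneEdgeLess K B, relabelCount G B := by
  unfold symDeck relabelCount
  rw [Finset.sum_comm]
  refine Finset.sum_congr rfl fun σ _ => ?_
  rw [Finset.sum_ite_eq]
  simp

lemma sum_ED_one {n : ℕ} (A : SimpleGraph (Fin n)) (g : SimpleGraph (Fin n) → ℤ) :
    ((ED 1 A).map g).sum = ∑ K, if OneEdgeLess K A then g K else 0 := by
  rw [ED_one_eq, ← Finset.sum_filter]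
  rfl

/-- Pairing the symmetrised deck with an invariant statistic recovers its sum over the deck. -/
lemma sum_symDeck_mul {n : ℕ} (G : SimpleGraph (Fin n)) (g : SimpleGraph (Fin n) → ℤ)
    (hg : ∀ (σ : Equiv.Perm (Fin n)) A, g (σ.simpleGraph A) = g A) :
    ∑ K, symDeck G K * g K = Fintype.card (Equiv.Perm (Fin n)) * ((ED 1 G).map g).sum := by
  simp only [symDeck, Finset.sum_mul]
  rw [Finset.sum_comm, sum_ED_one]
  have h : ∀ σ : Equiv.Perm (Fin n),
      ∑ K, (if OneEdgeLess K (σ.simpleGraph G) then (1 : ℤ) else 0) * g K =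
        ∑ K, if OneEdgeLess K G then g K else 0 := by
    intro σ
    rw [← Equiv.sum_comp σ.simpleGraph]
    refine Finset.sum_congr rfl fun K _ => ?_
    rw [hg]
    simp only [oneEdgeLess_simpleGraph_iff, ite_mul, one_mul, zero_mul]
  rw [Finset.sum_congr rfl fun σ _ => h σ, Finset.sum_const, nsmul_eq_mul, Finset.card_univ]

/-- The `1`-edge deck of a graph can be constructed from its modified `1`-deck:
if the modified `1`-decks of two `m`-edge graphs agree up to isomorphism, then so
do their `1`-edge decks. -/
theorem edge_deck_determined_by_modified_deck (n m : ℕ) (G H : SimpleGraph (Fin n))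
    (hG : G.edgeFinset.card = m) (hH : H.edgeFinset.card = m)
    (h : (MD 1 G).map isoClass = (MD 1 H).map isoClass) :
    (ED 1 G).map isoClass = (ED 1 H).map isoClass := by
  -- `x` is the formal difference `G - H` symmetrised over all relabellings, and `d` is its image
  -- under the operator that deletes an edge.
  let x : SimpleGraph (Fin n) → ℤ := fun B => relabelCount G B - relabelCount H B
  let d : SimpleGraph (Fin n) → ℤ := fun K => symDeck G K - symDeck H K
  have hx : ∀ (σ : Equiv.Perm (Fin n)) A, x (σ.simpleGraph A) = x A := fun σ A => by
    simp only [x, relabelCount_simpleGraph]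
  have hd : ∀ (σ : Equiv.Perm (Fin n)) A, d (σ.simpleGraph A) = d A := fun σ A => by
    simp only [d, symDeck_simpleGraph]
  have hdx : ∀ K, d K = ∑ B with OneEdgeLess K B, x B := fun K => by
    simp only [d, x, symDeck_eq_sum_relabelCount, Finset.sum_sub_distrib]
  have hMD : ∀ A : SimpleGraph (Fin n), ((MD 1 A).map x).sum = ((ED 1 A).map d).sum := by
    intro A
    rw [MD_one_eq, Multiset.map_bind, Multiset.sum_bind]
    simp only [hdx]
    rfl
  have hpair : ∀ g : SimpleGraph (Fin n) → ℤ,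
      (∀ (σ : Equiv.Perm (Fin n)) A, g (σ.simpleGraph A) = g A) →
      ∑ K, d K * g K = Fintype.card (Equiv.Perm (Fin n)) *
        (((ED 1 G).map g).sum - ((ED 1 H).map g).sum) := by
    intro g hg
    simp only [d, sub_mul, Finset.sum_sub_distrib, sum_symDeck_mul _ g hg, mul_sub]
  have hED : ((ED 1 G).map d).sum = ((ED 1 H).map d).sum := by
    rw [← hMD, ← hMD]
    exact sum_map_eq_of_map_isoClass_eq h x hx
  have hsq : ∑ K, d K * d K = 0 := by rw [hpair d hd, hED, sub_self, mul_zero]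
  have hzero : ∀ K, d K = 0 := by
    intro K
    have := (Finset.sum_eq_zero_iff_of_nonneg fun K _ => mul_self_nonneg (d K)).1 hsq K
      (Finset.mem_univ K)
    exact mul_self_eq_zero.1 this
  -- Multiplicities are read off by pairing `d = 0` with the indicator of an isomorphism class.
  ext c
  let g : SimpleGraph (Fin n) → ℤ := fun A => if c = isoClass A then 1 else 0
  have hg : ∀ (σ : Equiv.Perm (Fin n)) A, g (σ.simpleGraph A) = g A := fun σ A => by
    have : isoClass (σ.simpleGraph A) = isoClass A := (isoClass_eq_iff.2 ⟨σ, rfl⟩).symm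
    simp only [g, this]
  have hcount : ∀ P : Multiset (SimpleGraph (Fin n)),
      ((P.map isoClass).count c : ℤ) = (P.map g).sum := by
    intro P
    induction P using Multiset.induction_on with
    | empty => simp
    | cons A P ih => simp [Multiset.count_cons, ih, g, add_comm]
  have hp := hpair g hg
  simp only [hzero, zero_mul, Finset.sum_const_zero] at hp
  have hcard : (Fintype.card (Equiv.Perm (Fin n)) : ℤ) ≠ 0 := by
    exact_mod_cast Fintype.card_ne_zero
  have := (mul_eq_zero.1 hp.symm).resolve_left hcard
  have h2 : (((ED 1 G).map isoClass).count c : ℤ) = ((ED 1 H).map isoClass).count c := by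
    rw [hcount, hcount]
    linarith
  exact_mod_cast h2

end
end

section
/- Suppose 2m > N. Then the modified 1-deck matrix B_1 = m · I + A(J(N,m)), regarded as a matrix over ℚ, is invertible. (Equivalently, −m is not an eigenvalue of the Johnson graph J(N,m) when m > N/2.) -/
/-!
Let `U` be the inclusion matrix of `m`-subsets in `(m+1)`-subsets of `Fin N`. Two distinct `m`-sets
lie in a common `(m+1)`-set exactly when they are adjacent in the Johnson graph, and that set is
then their union, while every `m`-set lies in `N - m` sets of size `m + 1`. Hence
`Uᵀ U = (N - m) I + A`, where `A` is the adjacency matrix of the Johnson graph. In the same way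
`B_1 = m I + A`, so `B_1 = (2m - N) I + Uᵀ U` (`B_one_eq`). When `2m > N` this is a positive
multiple of the identity plus a positive semidefinite matrix, so its kernel is trivial.
-/

open Finset

/-- The inclusion matrix of `m`-subsets in `(m+1)`-subsets. Its rows are indexed by all subsets `Q`
of `Fin N`; those with `|Q| ≠ m + 1` are zero. -/
def upMatrix (N m : ℕ) : Matrix (Finset (Fin N)) (Omega N m) ℚ := fun Q S =>
  if (S : Finset (Fin N)) ⊆ Q ∧ Q.card = m + 1 then 1 else 0

/-- The diagonal entries of `B_1`: the admissible pairs are `({e}, {e})` with `e ∈ S`. -/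
lemma B_one_diag (N m : ℕ) (S : Omega N m) : B N m 1 S S = m := by
  obtain ⟨S, hS⟩ := S
  unfold B
  norm_cast
  refine Eq.trans (Eq.symm ?_) hS
  apply Finset.card_bij (fun e _ => (({e} : Finset (Fin N)), ({e} : Finset (Fin N))))
  · intro e he
    simp only [mem_filter, mem_univ, true_and, card_singleton]
    refine ⟨by simpa using he, ?_, ?_⟩
    · ext x; simp
    · ext x; by_cases hx : x = e <;> simp [hx, he]
  · intro a _ b _ hab
    simpa using hab
  · rintro ⟨X, Y⟩ hp
    simp only [mem_filter, mem_univ, true_and] at hp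
    obtain ⟨hXS, hX, hd, hY, hU⟩ := hp
    obtain ⟨e, rfl⟩ := Finset.card_eq_one.1 hX
    obtain ⟨f, rfl⟩ := Finset.card_eq_one.1 hY
    have he : e ∈ S := by simpa using hXS
    have : e = f := by
      have := hU.symm ▸ he
      simpa using this
    subst this
    exact ⟨e, he, rfl⟩

/-- The off-diagonal entries of `B_1`: the only admissible pair is `(S \ T, T \ S)`. Adjacency in
the Johnson graph is expressed through the union of the two sets. -/
lemma B_one_offdiag (N m : ℕ) (T S : Omega N m) (hne : T ≠ S) :
    B N m 1 T S = if ((T : Finset (Fin N)) ∪ S).card = m + 1 then 1 else 0 := by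
  obtain ⟨S, hS⟩ := S
  obtain ⟨T, hT⟩ := T
  have hne : T ≠ S := by simpa using hne
  unfold B
  dsimp only
  split_ifs with hc
  · norm_cast
    rw [Finset.card_eq_one]
    refine ⟨(S \ T, T \ S), ?_⟩
    have h1 : (S \ T).card + T.card = (S ∪ T).card := Finset.card_sdiff_add_card S T
    have h2 : (T \ S).card + S.card = (T ∪ S).card := Finset.card_sdiff_add_card T S
    rw [Finset.union_comm S T] at h1
    ext ⟨X, Y⟩
    simp only [mem_filter, mem_univ, true_and, mem_singleton, Prod.mk.injEq]
    constructor
    · rintro ⟨hXS, hX, hd, hY, hU⟩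
      constructor
      · symm
        -- `S \ T ⊆ X` because `T` contains `S \ X`, and both sets have one element.
        apply Finset.eq_of_subset_of_card_le
        · intro x hx; grind
        · omega
      · symm
        apply Finset.eq_of_subset_of_card_le
        · intro x hx; grind
        · omega
    · rintro ⟨rfl, rfl⟩
      refine ⟨sdiff_subset, by omega, ?_, by omega, ?_⟩
      · ext x; grind
      · ext x; grind
  · norm_cast
    rw [Finset.card_eq_zero, Finset.filter_eq_empty_iff]
    rintro ⟨X, Y⟩ - ⟨hXS, hX, hd, hY, hU⟩
    apply hc
    dsimp only at hXS hX hd hY hU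
    have h1 : T ∪ S ⊆ S ∪ Y := by intro x hx; grind
    have h2 := Finset.card_le_card h1
    have h3 := Finset.card_union_le S Y
    have h4 : S.card < (T ∪ S).card := by
      apply Finset.card_lt_card
      refine ⟨subset_union_right, fun h => hne ?_⟩
      exact Finset.eq_of_subset_of_card_le (subset_union_left.trans h) (by omega)
    omega

lemma upMatrix_gram (N m : ℕ) (T S : Omega N m) :
    ((upMatrix N m).transpose * upMatrix N m) T S =
      ((Finset.univ.filter (fun Q : Finset (Fin N) =>
        (T : Finset (Fin N)) ∪ S ⊆ Q ∧ Q.card = m + 1)).card : ℚ) := by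
  rw [Matrix.mul_apply, Finset.card_filter]
  push_cast
  apply Finset.sum_congr rfl
  intro Q _
  simp only [Matrix.transpose_apply, upMatrix, Finset.union_subset_iff]
  split_ifs <;> simp_all

lemma card_up_diag (N m : ℕ) (S : Omega N m) :
    (Finset.univ.filter (fun Q : Finset (Fin N) =>
        (S : Finset (Fin N)) ∪ S ⊆ Q ∧ Q.card = m + 1)).card = N - m := by
  obtain ⟨S, hS⟩ := S
  have hc : Sᶜ.card = N - m := by rw [Finset.card_compl, hS, Fintype.card_fin]
  rw [← hc]
  symm
  apply Finset.card_bij (fun e _ => insert e S)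
  · intro e he
    simp only [mem_compl] at he
    simp [Finset.card_insert_of_notMem he, hS]
  · intro a ha b hb hab
    simp only [mem_compl] at ha hb
    have : a ∈ insert b S := hab ▸ Finset.mem_insert_self a S
    simpa [ha] using this
  · intro Q hQ
    simp only [mem_filter, mem_univ, true_and, union_self] at hQ
    obtain ⟨hSQ, hQ⟩ := hQ
    have h1 : (Q \ S).card = 1 := by rw [Finset.card_sdiff_of_subset hSQ]; omega
    obtain ⟨e, he⟩ := Finset.card_eq_one.1 h1
    have he' : e ∈ Q \ S := by simp [he]
    refine ⟨e, by simpa using (Finset.mem_sdiff.1 he').2, ?_⟩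
    rw [Finset.insert_eq, ← he, Finset.sdiff_union_of_subset hSQ]

lemma card_up_offdiag (N m : ℕ) (T S : Omega N m) (hne : T ≠ S) :
    (Finset.univ.filter (fun Q : Finset (Fin N) =>
        (T : Finset (Fin N)) ∪ S ⊆ Q ∧ Q.card = m + 1)).card =
      if ((T : Finset (Fin N)) ∪ S).card = m + 1 then 1 else 0 := by
  obtain ⟨S, hS⟩ := S
  obtain ⟨T, hT⟩ := T
  have hne : T ≠ S := by simpa using hne
  dsimp only
  have h4 : S.card < (T ∪ S).card := by
    apply Finset.card_lt_card
    refine ⟨subset_union_right, fun h => hne ?_⟩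
    exact Finset.eq_of_subset_of_card_le (subset_union_left.trans h) (by omega)
  split_ifs with hc
  · rw [Finset.card_eq_one]
    refine ⟨T ∪ S, ?_⟩
    ext Q
    simp only [mem_filter, mem_univ, true_and, mem_singleton]
    constructor
    · rintro ⟨h1, h2⟩
      exact (Finset.eq_of_subset_of_card_le h1 (by omega)).symm
    · rintro rfl
      exact ⟨subset_rfl, hc⟩
  · rw [Finset.card_eq_zero, Finset.filter_eq_empty_iff]
    rintro Q - ⟨h1, h2⟩
    have := Finset.card_le_card h1
    omega

lemma B_one_eq (N m : ℕ) (hm : m ≤ N) :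
    (B N m 1).map (Int.cast : ℤ → ℚ) =
      (2 * m - N : ℚ) • (1 : Matrix (Omega N m) (Omega N m) ℚ) +
        (upMatrix N m).transpose * upMatrix N m := by
  ext T S
  rw [Matrix.add_apply, upMatrix_gram, Matrix.map_apply, Matrix.smul_apply]
  by_cases hTS : T = S
  · subst hTS
    rw [B_one_diag, card_up_diag, Matrix.one_apply_eq, Nat.cast_sub hm]
    push_cast
    simp only [smul_eq_mul]
    ring
  · rw [B_one_offdiag _ _ _ _ hTS, card_up_offdiag _ _ _ _ hTS, Matrix.one_apply_ne hTS]
    simp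

/-- If `2m > N` then the modified `1`-deck matrix `B_1`, regarded as a matrix
over `ℚ`, is invertible. -/
theorem modified_one_invertible (N m : ℕ) (hm : m ≤ N) (h : 2 * m > N) :
    IsUnit ((B N m 1).map (Int.cast : ℤ → ℚ)) := by
  rw [← Matrix.mulVec_injective_iff_isUnit]
  rw [B_one_eq N m hm]
  set U := upMatrix N m
  have hc : (0 : ℚ) < 2 * m - N := by
    have : (N : ℚ) < 2 * m := by exact_mod_cast h
    linarith
  rw [← Matrix.coe_mulVecLin, injective_iff_map_eq_zero]
  intro v hv
  rw [Matrix.mulVecLin_apply] at hv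
  -- Pairing `B_1 v = 0` with `v` gives `(2m - N) ⟨v, v⟩ + ⟨U v, U v⟩ = 0`.
  have h0 : (2 * m - N : ℚ) * (v ⬝ᵥ v) + (U.mulVec v) ⬝ᵥ (U.mulVec v) = 0 := by
    have := congrArg (fun w => v ⬝ᵥ w) hv
    simp only [Matrix.add_mulVec, Matrix.smul_mulVec, Matrix.one_mulVec, dotProduct_add,
      dotProduct_smul, dotProduct_zero, smul_eq_mul, ← Matrix.mulVec_mulVec] at this
    rwa [Matrix.dotProduct_mulVec v, Matrix.vecMul_transpose] at this
  have hnn : ∀ {ι : Type} [Fintype ι] (w : ι → ℚ), 0 ≤ w ⬝ᵥ w := fun w =>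
    Finset.sum_nonneg fun i _ => mul_self_nonneg (w i)
  have h1 := hnn v
  have h2 := hnn (U.mulVec v)
  have h3 : v ⬝ᵥ v = 0 := by nlinarith
  exact dotProduct_self_eq_zero.1 h3
end

section
/- (Lovász's edge reconstruction theorem.) Let G and H be simple graphs on Fin n, each with exactly m edges, where 2m > C(n,2). If the 1-edge decks ED_1(G) and ED_1(H) agree up to isomorphism (the multisets of isomorphism classes of G − e over e ∈ E(G) and of H − e over e ∈ E(H) coincide), then G and H are isomorphic. -/
/-!
Lovász's argument. For a set `X` of vertex pairs and a graph `B`, let `homCount X B` be the number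
of permutations of the vertices that send every pair of `X` to an edge of `B`.

* Kelly's lemma (`sum_ED_homCount`): summing `homCount X` over the `1`-edge deck of `B` gives
  `(|E(B)| - |X|) * homCount X B`, since a placement of `X` in `B` survives the deletion of exactly
  the `|E(B)| - |X|` edges that it does not use. As `homCount X` is an isomorphism invariant, graphs
  with `m` edges and the same deck have the same `homCount X` whenever `|X| < m`.
* Inclusion–exclusion (`alternating_sum_homCount`): `∑ X ⊆ E, (-1)^|X| * homCount X B` counts the
  permutations carrying `E` into the complement of `B`, and there are none if
  `|E| + |E(B)| > C(n, 2)`.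

Take `E = E(G)` and `B = G`, then `B = H`. Both alternating sums vanish and they agree in every term
with `X ≠ E(G)`, so `homCount E(G) H = homCount E(G) G ≥ 1`. Hence some permutation embeds `G` in
`H`, and it is an isomorphism because the numbers of edges are equal.
-/

open Finset

noncomputable section
open scoped Classical

/-- The number of permutations of the vertices that map every pair in `X` to an edge of `B`. -/
def homCount {n : ℕ} (X : Finset (Sym2 (Fin n))) (B : SimpleGraph (Fin n)) : ℕ :=
  #{π : Equiv.Perm (Fin n) | ∀ e ∈ X, Sym2.map π e ∈ B.edgeSet}

theorem homCount_eq_of_iso {n : ℕ} (X : Finset (Sym2 (Fin n))) {B C : SimpleGraph (Fin n)}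
    (φ : B ≃g C) : homCount X B = homCount X C := by
  have key : ∀ (π : Equiv.Perm (Fin n)) (e : Sym2 (Fin n)),
      Sym2.map (π.trans φ.toEquiv) e ∈ C.edgeSet ↔ Sym2.map π e ∈ B.edgeSet := by
    intro π e
    induction e with
    | _ a b => exact φ.map_adj_iff
  unfold homCount
  refine Finset.card_bij (fun π _ => π.trans φ.toEquiv) ?_ ?_ ?_
  · intro π hπ
    simp only [Finset.mem_filter, Finset.mem_univ, true_and] at hπ ⊢
    exact fun e he => (key π e).2 (hπ e he)
  · intro π _ σ _ hπσ
    exact Equiv.ext fun x => φ.injective (Equiv.congr_fun hπσ x)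
  · intro σ hσ
    simp only [Finset.mem_filter, Finset.mem_univ, true_and] at hσ
    have hc : (σ.trans φ.toEquiv.symm).trans φ.toEquiv = σ := by
      ext x; simp
    refine ⟨σ.trans φ.toEquiv.symm, ?_, hc⟩
    simp only [Finset.mem_filter, Finset.mem_univ, true_and]
    intro e he
    rw [← key, hc]
    exact hσ e he

/-- Kelly's lemma for the `1`-edge deck. Truncation of the subtraction is
harmless: if `|X| > |E(B)|` then both sides are zero. -/
theorem sum_ED_homCount {n : ℕ} (X : Finset (Sym2 (Fin n))) (B : SimpleGraph (Fin n)) :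
    ((ED 1 B).map (homCount X)).sum = (#B.edgeFinset - #X) * homCount X B := by
  have h1 : ((ED 1 B).map (homCount X)).sum
      = ∑ e ∈ B.edgeFinset, homCount X (B.deleteEdges {e}) := by
    simp [ED, Finset.powersetCard_one]
  -- Double counting of the pairs `(π, e)` such that `π` maps `X` into `B - e`.
  have h2 : ∀ π : Equiv.Perm (Fin n),
      #{e ∈ B.edgeFinset | ∀ x ∈ X, Sym2.map π x ∈ (B.deleteEdges {e}).edgeSet}
        = if ∀ x ∈ X, Sym2.map π x ∈ B.edgeSet then #B.edgeFinset - #X else 0 := by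
    intro π
    split_ifs with hπ
    · have hinj : Function.Injective (Sym2.map π) := Sym2.map.injective π.injective
      have hsub : X.image (Sym2.map π) ⊆ B.edgeFinset := by
        intro e he
        obtain ⟨x, hx, rfl⟩ := Finset.mem_image.1 he
        simpa using hπ x hx
      rw [← Finset.card_image_of_injective X hinj, ← Finset.card_sdiff_of_subset hsub]
      congr 1
      ext e
      simp only [Finset.mem_filter, Finset.mem_sdiff, Finset.mem_image,
        SimpleGraph.edgeSet_deleteEdges, Set.mem_sdiff, Set.mem_singleton_iff]
      constructor
      · rintro ⟨he, hx⟩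
        exact ⟨he, fun ⟨x, hxX, hxe⟩ => (hx x hxX).2 hxe⟩
      · rintro ⟨he, hx⟩
        exact ⟨he, fun x hxX => ⟨hπ x hxX, fun hxe => hx ⟨x, hxX, hxe⟩⟩⟩
    · rw [Finset.card_eq_zero, Finset.filter_eq_empty_iff]
      intro e _ hx
      refine hπ fun x hxX => ?_
      have := hx x hxX
      rw [SimpleGraph.edgeSet_deleteEdges] at this
      exact this.1
  rw [h1]
  unfold homCount
  simp only [Finset.card_filter] at h2 ⊢
  rw [Finset.sum_comm, Finset.mul_sum]
  refine Finset.sum_congr rfl fun π _ => ?_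
  rw [mul_ite, mul_one, mul_zero]
  convert h2 π

/-- Inclusion–exclusion, in the case where every permutation maps some pair of `E` to an edge
of `B`. -/
theorem alternating_sum_homCount {n : ℕ} (E : Finset (Sym2 (Fin n))) (B : SimpleGraph (Fin n))
    (hE : ∀ π : Equiv.Perm (Fin n), ∃ e ∈ E, Sym2.map π e ∈ B.edgeSet) :
    ∑ X ∈ E.powerset, (-1 : ℤ) ^ #X * (homCount X B : ℤ) = 0 := by
  unfold homCount
  simp only [Finset.card_filter, Nat.cast_sum, Finset.mul_sum]
  rw [Finset.sum_comm]
  refine Finset.sum_eq_zero fun π _ => ?_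
  have hfil : {X ∈ E.powerset | ∀ e ∈ X, Sym2.map π e ∈ B.edgeSet}
      = ({e ∈ E | Sym2.map π e ∈ B.edgeSet} : Finset _).powerset := by
    ext X
    simp only [Finset.mem_filter, Finset.mem_powerset, Finset.subset_iff]
    exact ⟨fun ⟨h, h'⟩ e he => ⟨h he, h' e he⟩, fun h => ⟨fun e he => (h he).1,
      fun e he => (h he).2⟩⟩
  simp only [Nat.cast_ite, Nat.cast_one, Nat.cast_zero, mul_ite, mul_one, mul_zero]
  rw [← Finset.sum_filter, hfil, Finset.sum_powerset_neg_one_pow_card, if_neg]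
  obtain ⟨e, he, he'⟩ := hE π
  exact Finset.ne_empty_of_mem (Finset.mem_filter.2 ⟨he, he'⟩)

/-- Two graphs with more than `C(n, 2)` edges in total cannot be placed edge-disjointly. -/
theorem exists_common_edge {n : ℕ} (G B : SimpleGraph (Fin n))
    (hc : n.choose 2 < #G.edgeFinset + #B.edgeFinset) (π : Equiv.Perm (Fin n)) :
    ∃ e ∈ G.edgeFinset, Sym2.map π e ∈ B.edgeSet := by
  by_contra! hno
  have hinj : Function.Injective (Sym2.map π) := Sym2.map.injective π.injective
  have hdisj : Disjoint (G.edgeFinset.image (Sym2.map π)) B.edgeFinset := by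
    rw [Finset.disjoint_left]
    intro e he heB
    obtain ⟨x, hx, rfl⟩ := Finset.mem_image.1 he
    exact hno x hx (by simpa using heB)
  have hsub : G.edgeFinset.image (Sym2.map π) ∪ B.edgeFinset
      ⊆ (⊤ : SimpleGraph (Fin n)).edgeFinset := by
    refine Finset.union_subset ?_ (SimpleGraph.edgeFinset_mono le_top)
    intro e he
    obtain ⟨x, hx, rfl⟩ := Finset.mem_image.1 he
    induction x with
    | _ a b =>
      have hab : G.Adj a b := by simpa using hx
      simpa using hab.ne
  have hle := Finset.card_le_card hsub
  rw [Finset.card_union_of_disjoint hdisj, Finset.card_image_of_injective _ hinj,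
    SimpleGraph.card_edgeFinset_top_eq_card_choose_two, Fintype.card_fin] at hle
  omega

/-- Lovász's edge reconstruction theorem: two `m`-edge graphs on `Fin n` with
`2m > C(n,2)` and the same `1`-edge deck up to isomorphism are isomorphic. -/
theorem lovasz_edge_reconstruction (n m : ℕ) (G H : SimpleGraph (Fin n))
    (hG : G.edgeFinset.card = m) (hH : H.edgeFinset.card = m)
    (hm : 2 * m > n.choose 2)
    (h : (ED 1 G).map isoClass = (ED 1 H).map isoClass) :
    Nonempty (G ≃g H) := by
  have hdeck : ∀ X, ((ED 1 G).map (homCount X)).sum = ((ED 1 H).map (homCount X)).sum := by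
    intro X
    let F : Quotient (isoSetoid n) → ℕ :=
      Quotient.lift (homCount X) fun _ _ hBC => homCount_eq_of_iso X hBC.some
    have hF := congrArg (fun s => (s.map F).sum) h
    simp only [Multiset.map_map] at hF
    exact hF
  have hproper : ∀ X, #X < m → homCount X G = homCount X H := by
    intro X hX
    have hX' := hdeck X
    rw [sum_ED_homCount, sum_ED_homCount, hG, hH] at hX'
    exact Nat.eq_of_mul_eq_mul_left (by omega) hX'
  have hsumG := alternating_sum_homCount G.edgeFinset G (exists_common_edge G G (by omega))
  have hsumH := alternating_sum_homCount G.edgeFinset H (exists_common_edge G H (by omega))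
  have htop : homCount G.edgeFinset G = homCount G.edgeFinset H := by
    have hmem := Finset.mem_powerset_self G.edgeFinset
    rw [← Finset.add_sum_erase _ _ hmem] at hsumG hsumH
    have hrest : ∀ X ∈ G.edgeFinset.powerset.erase G.edgeFinset,
        (-1 : ℤ) ^ #X * (homCount X G : ℤ) = (-1 : ℤ) ^ #X * (homCount X H : ℤ) := by
      intro X hX
      rw [Finset.mem_erase, Finset.mem_powerset] at hX
      rw [hproper X (hG ▸ Finset.card_lt_card (hX.2.ssubset_of_ne hX.1))]
    rw [Finset.sum_congr rfl hrest] at hsumG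
    have heq := add_right_cancel (hsumG.trans hsumH.symm)
    exact_mod_cast mul_left_cancel₀ (pow_ne_zero _ (by norm_num)) heq
  have hpos : 0 < homCount G.edgeFinset H := by
    rw [← htop]
    refine Finset.card_pos.2 ⟨1, ?_⟩
    simp
  obtain ⟨π, hπ⟩ := Finset.card_pos.1 hpos
  simp only [Finset.mem_filter, Finset.mem_univ, true_and] at hπ
  have hinj : Function.Injective (Sym2.map π) := Sym2.map.injective π.injective
  have himage : G.edgeFinset.image (Sym2.map π) = H.edgeFinset := by
    refine Finset.eq_of_subset_of_card_le ?_ ?_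
    · intro e he
      obtain ⟨x, hx, rfl⟩ := Finset.mem_image.1 he
      simpa using hπ x hx
    · rw [Finset.card_image_of_injective _ hinj, hG, hH]
  refine ⟨⟨π, ?_⟩⟩
  intro a b
  have hab : Sym2.map π s(a, b) ∈ H.edgeFinset ↔ s(a, b) ∈ G.edgeFinset := by
    rw [← himage, hinj.mem_finset_image]
  simpa using hab

end
end
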